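/- arXiv:1607.07174 — 2 statements merged into one kernel-verified Lean document; each statement's English description precedes it below -/
import Mathlib

section
/- Let C be a minor-closed class of finite simple graphs all of whose members have acyclic chromatic number at most x. Then every G in C satisfies f_2(G) ≤ C(x,2)·(3·C(x,2)+1) if x ≤ 9, and f_2(G) ≤ C(x,2)·(12x+1) if x ≥ 9, where C(x,2) is the binomial coefficient (x choose 2). -/
open scoped Classical

namespace InducedArboricity

/-- The edges of the subgraph of `G` induced by vertex set `S`, viewed as edges of `G`. -/
def forestEdges {V : Type*} (G : SimpleGraph V) (S : Set V) : Set (Sym2 V) :=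
  {e | e ∈ G.edgeSet ∧ ∀ x ∈ e, x ∈ S}

/-- The number of edges of the connected component of `v` in `H`. -/
noncomputable def compEdgeCount {W : Type*} (H : SimpleGraph W) (v : W) : ℕ :=
  {e | e ∈ H.edgeSet ∧ ∀ x ∈ e, H.Reachable v x}.ncard

/-- `S` induces a `k`-strong forest in `G`: the induced subgraph is acyclic and each of its
connected components has at least `k` edges. -/
def IsStrongForest {V : Type*} (G : SimpleGraph V) (k : ℕ) (S : Set V) : Prop :=
  (G.induce S).IsAcyclic ∧ ∀ v : S, k ≤ compEdgeCount (G.induce S) v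

/-- An edge `e` of `G` is `k`-valid if it lies in some `k`-strong forest of `G`. -/
def KValid {V : Type*} (G : SimpleGraph V) (k : ℕ) (e : Sym2 V) : Prop :=
  ∃ S : Set V, IsStrongForest G k S ∧ e ∈ forestEdges G S

/-- The `k`-strong induced arboricity: the least number of `k`-strong forests of `G`
covering all `k`-valid edges of `G`. -/
noncomputable def fStrong {V : Type*} (G : SimpleGraph V) (k : ℕ) : ℕ :=
  sInf {N | ∃ F : Fin N → Set V,
    (∀ i, IsStrongForest G k (F i)) ∧
    ∀ e : Sym2 V, KValid G k e → ∃ i, e ∈ forestEdges G (F i)}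

/-- `G` is a `d`-shallow minor of `H`. -/
def IsShallowMinor {V W : Type*} (d : ℕ) (G : SimpleGraph V) (H : SimpleGraph W) : Prop :=
  ∃ B : V → Set W,
    Pairwise (Function.onFun Disjoint B) ∧
    (∀ v, ∃ c : B v, ∀ y : B v,
      (H.induce (B v)).Reachable c y ∧ (H.induce (B v)).dist c y ≤ d) ∧
    (∀ u v, G.Adj u v → ∃ x ∈ B u, ∃ y ∈ B v, H.Adj x y)

/-- A class of finite simple graphs, one set of graphs for each number of vertices. -/
def GraphClass : Type :=
  ∀ n : ℕ, Set (SimpleGraph (Fin n))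

/-- A class of graphs has bounded expansion if for every `d` there is a constant `a` such that
every `d`-shallow minor of a member of the class has at most `a` times as many edges
as vertices. -/
def BoundedExpansion (C : GraphClass) : Prop :=
  ∀ d : ℕ, ∃ a : ℕ, ∀ (m : ℕ) (G : SimpleGraph (Fin m)),
    (∃ n : ℕ, ∃ H ∈ C n, IsShallowMinor d G H) → G.edgeSet.ncard ≤ a * m

/-- A class of graphs is nowhere dense if for every `d` some graph is not a `d`-shallow minor
of any member of the class. -/
def NowhereDense (C : GraphClass) : Prop :=
  ∀ d : ℕ, ∃ (m : ℕ) (G : SimpleGraph (Fin m)), ¬ ∃ n : ℕ, ∃ H ∈ C n, IsShallowMinor d G H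

/-- The closed neighborhood of `v` in `G`. -/
def closedNbr {V : Type*} (G : SimpleGraph V) (v : V) : Set V :=
  insert v (G.neighborSet v)

/-- The sum of the labels over the closed neighborhood of `v`. -/
noncomputable def closedNbrSum {V : Type*} [Fintype V] (G : SimpleGraph V)
    (f : V → ℕ) (v : V) : ℕ :=
  ∑ x : V, if x ∈ closedNbr G v then f x else 0

/-- A labeling is distinguishing if adjacent vertices with different closed neighborhoods
receive different label sums over their closed neighborhoods. -/
def Distinguishing {V : Type*} [Fintype V] (G : SimpleGraph V) (f : V → ℕ) : Prop :=
  ∀ u v : V, G.Adj u v → closedNbr G u ≠ closedNbr G v →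
    closedNbrSum G f u ≠ closedNbrSum G f v

/-- The adjacent closed vertex-distinguishing number of `G`. -/
noncomputable def disNumber {V : Type*} [Fintype V] (G : SimpleGraph V) : ℕ :=
  sInf {L | 1 ≤ L ∧ ∃ f : V → ℕ, (∀ v, 1 ≤ f v ∧ f v ≤ L) ∧ Distinguishing G f}

/-- A proper coloring in which any two color classes together induce a forest. -/
def IsAcyclicColoring {V : Type*} (G : SimpleGraph V) {m : ℕ} (c : V → Fin m) : Prop :=
  (∀ u v : V, G.Adj u v → c u ≠ c v) ∧
  ∀ i j : Fin m, (G.induce {v | c v = i ∨ c v = j}).IsAcyclic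

/-- The acyclic chromatic number of `G`. -/
noncomputable def chiAcyc {V : Type*} (G : SimpleGraph V) : ℕ :=
  sInf {m | ∃ c : V → Fin m, IsAcyclicColoring G c}

/-- The edge arboricity of `G`: the least number of (not necessarily induced) forests
covering all edges of `G`. -/
noncomputable def arboricity {V : Type*} (G : SimpleGraph V) : ℕ :=
  sInf {N | ∃ F : Fin N → SimpleGraph V,
    (∀ i, F i ≤ G ∧ (F i).IsAcyclic) ∧
    ∀ e ∈ G.edgeSet, ∃ i, e ∈ (F i).edgeSet}

/-- `G` admits a tree decomposition of width at most `t`. -/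
def HasTreewidthAtMost {V : Type*} (G : SimpleGraph V) (t : ℕ) : Prop :=
  ∃ (ι : Type) (T : SimpleGraph ι) (B : ι → Finset V),
    T.IsTree ∧
    (∀ e ∈ G.edgeSet, ∃ i, ∀ x ∈ e, x ∈ B i) ∧
    (∀ v : V, (T.induce {i | v ∈ B i}).Connected) ∧
    (∀ i, (B i).card ≤ t + 1)

/-- The tree-width of `G`. -/
noncomputable def treewidth {V : Type*} (G : SimpleGraph V) : ℕ :=
  sInf {t | HasTreewidthAtMost G t}

/-- `G` has tree-depth at most `d`: there is a "forest order" on the vertices (the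
ancestor order of a rooted spanning forest) in which ancestor sets are chains of at most
`d` vertices and endpoints of edges of `G` are comparable.  Equivalently, every connected
component of `G` is a subgraph of the transitive closure of a rooted tree of depth `d`. -/
def HasTreedepthAtMost {V : Type*} (G : SimpleGraph V) (d : ℕ) : Prop :=
  ∃ le : V → V → Prop, IsPartialOrder V le ∧
    (∀ v : V, IsChain le {u | le u v}) ∧
    (∀ u v : V, G.Adj u v → le u v ∨ le v u) ∧
    (∀ v : V, {u | le u v}.ncard ≤ d)

/-- The tree-depth of `G`. -/
noncomputable def treedepth {V : Type*} (G : SimpleGraph V) : ℕ :=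
  sInf {d | HasTreedepthAtMost G d}

/-- `G` is a minor of `H`, witnessed by disjoint connected branch sets. -/
def IsMinorOf {V W : Type*} (G : SimpleGraph V) (H : SimpleGraph W) : Prop :=
  ∃ B : V → Set W,
    Pairwise (Function.onFun Disjoint B) ∧
    (∀ v, (B v).Nonempty) ∧
    (∀ v, (H.induce (B v)).Connected) ∧
    (∀ u v, G.Adj u v → ∃ x ∈ B u, ∃ y ∈ B v, H.Adj x y)

/-- A class of graphs closed under taking minors. -/
def MinorClosed (C : GraphClass) : Prop :=
  ∀ (m n : ℕ) (G : SimpleGraph (Fin m)) (H : SimpleGraph (Fin n)),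
    H ∈ C n → IsMinorOf G H → G ∈ C m

/-- Planarity, via Wagner's characterization: no `K₅` and no `K₃,₃` minor. -/
def IsPlanar {V : Type*} (G : SimpleGraph V) : Prop :=
  ¬ IsMinorOf (SimpleGraph.completeGraph (Fin 5)) G ∧
  ¬ IsMinorOf (completeBipartiteGraph (Fin 3) (Fin 3)) G

/-- Every vertex of `S` lies on a path with two edges inside `S`, and `S` induces a forest. -/
def PathForest {V : Type*} (G : SimpleGraph V) (S : Set V) : Prop :=
  (G.induce S).IsAcyclic ∧ ∀ v ∈ S, ∃ a ∈ S, ∃ b ∈ S, ∃ c ∈ S,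
    G.Adj a b ∧ G.Adj b c ∧ a ≠ c ∧ (v = a ∨ v = b)

lemma PathForest.strong {V : Type*} [Finite V] {G : SimpleGraph V} {S : Set V}
    (h : PathForest G S) : IsStrongForest G 2 S := by
  refine ⟨h.1, ?_⟩
  rintro ⟨v, hv⟩
  obtain ⟨a, ha, b, hb, c, hc, hab, hbc, hac, hv'⟩ := h.2 v hv
  have h1 : (G.induce S).Adj ⟨a, ha⟩ ⟨b, hb⟩ := hab
  have h2 : (G.induce S).Adj ⟨b, hb⟩ ⟨c, hc⟩ := hbc
  have hr : (G.induce S).Reachable ⟨v, hv⟩ ⟨b, hb⟩ := by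
    rcases hv' with rfl | rfl
    · exact h1.reachable
    · exact SimpleGraph.Reachable.refl _
  have hra := hr.trans h1.symm.reachable
  have hrc := hr.trans h2.reachable
  have hne : s((⟨a, ha⟩ : S), (⟨b, hb⟩ : S)) ≠ s((⟨b, hb⟩ : S), (⟨c, hc⟩ : S)) := by
    intro he
    rw [Sym2.eq_iff] at he
    rcases he with ⟨h3, h4⟩ | ⟨h3, h4⟩
    · exact hab.ne (congrArg Subtype.val h3)
    · exact hac (congrArg Subtype.val h3)
  unfold compEdgeCount
  rw [← Set.ncard_pair hne]
  apply Set.ncard_le_ncard _ (Set.toFinite _)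
  rintro e (rfl | rfl)
  · refine ⟨h1, ?_⟩
    intro z hz
    rcases Sym2.mem_iff.1 hz with rfl | rfl
    · exact hra
    · exact hr
  · refine ⟨h2, ?_⟩
    intro z hz
    rcases Sym2.mem_iff.1 hz with rfl | rfl
    · exact hr
    · exact hrc

lemma acyclic_of_rank {W : Type*} (H : SimpleGraph W) (r : W → ℕ)
    (h : ∀ v a b, H.Adj v a → H.Adj v b → r a ≤ r v → r b ≤ r v → a = b) : H.IsAcyclic := by
  intro u p hp
  obtain ⟨m, hm, hmax⟩ := Finset.exists_max_image p.support.toFinset r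
    ⟨u, by simp⟩
  rw [List.mem_toFinset] at hm
  have hq := hp.rotate hm
  have hsub : ∀ z ∈ (p.rotate m hm).support, r z ≤ r m := by
    intro z hz
    exact hmax z (by simpa using hz)
  exact hq.snd_ne_penultimate (h m _ _ (SimpleGraph.Walk.adj_snd hq.not_nil)
    (SimpleGraph.Walk.adj_penultimate hq.not_nil).symm
    (hsub _ (SimpleGraph.Walk.getVert_mem_support _ _))
    (hsub _ (SimpleGraph.Walk.getVert_mem_support _ _)))

/-- A valid edge has a vertex adjacent to exactly one of its ends. -/
lemma exists_of_valid {V : Type*} [Finite V] {G : SimpleGraph V} {u v : V}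
    (h : KValid G 2 s(u, v)) :
    G.Adj u v ∧ ∃ w, (G.Adj u w ∧ ¬ G.Adj v w ∧ w ≠ v) ∨ (G.Adj v w ∧ ¬ G.Adj u w ∧ w ≠ u) := by
  obtain ⟨S, ⟨hac, hS⟩, he, hm⟩ := h
  have hu : u ∈ S := hm u (by simp)
  have hv : v ∈ S := hm v (by simp)
  have huv : G.Adj u v := he
  refine ⟨huv, ?_⟩
  by_contra hcon
  push Not at hcon
  have htri : ∀ z ∈ S, G.Adj u z → G.Adj v z → False := by
    intro z hz h1 h2
    have hf := hac.cliqueFree (n := 3) le_rfl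
    apply hf {⟨u, hu⟩, ⟨v, hv⟩, ⟨z, hz⟩}
    rw [SimpleGraph.is3Clique_triple_iff]
    exact ⟨huv, h1, h2⟩
  have hu1 : ∀ z ∈ S, G.Adj u z → z = v := by
    intro z hz h1
    by_contra hne
    exact hne ((hcon z).1 h1 (fun h2 => htri z hz h1 h2))
  have hv1 : ∀ z ∈ S, G.Adj v z → z = u := by
    intro z hz h1
    by_contra hne
    exact hne ((hcon z).2 h1 (fun h2 => htri z hz h2 h1))
  have hreach : ∀ z : S, (G.induce S).Reachable ⟨u, hu⟩ z → z.1 = u ∨ z.1 = v := by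
    intro z hz
    rw [SimpleGraph.reachable_iff_reflTransGen] at hz
    induction hz with
    | refl => exact Or.inl rfl
    | @tail b c _ hbc ih =>
      have hbc' : G.Adj b.1 c.1 := hbc
      rcases ih with h1 | h1
      · rw [h1] at hbc'; exact Or.inr (hu1 _ c.2 hbc')
      · rw [h1] at hbc'; exact Or.inl (hv1 _ c.2 hbc')
  have h2 := hS ⟨u, hu⟩
  have h3 : compEdgeCount (G.induce S) ⟨u, hu⟩ ≤ 1 := by
    unfold compEdgeCount
    rw [← Set.ncard_singleton (s((⟨u, hu⟩ : S), (⟨v, hv⟩ : S)))]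
    apply Set.ncard_le_ncard _ (Set.toFinite _)
    rintro e ⟨he1, he2⟩
    induction e using Sym2.ind with
    | _ a b =>
      have ha := hreach a (he2 a (by simp))
      have hb := hreach b (he2 b (by simp))
      have hab : G.Adj a.1 b.1 := he1
      obtain ⟨a, _⟩ := a
      obtain ⟨b, _⟩ := b
      simp only at ha hb hab
      rcases ha with rfl | rfl <;> rcases hb with rfl | rfl
      · exact absurd rfl hab.ne
      · rfl
      · exact Sym2.eq_swap
      · exact absurd rfl hab.ne
  omega

lemma exists_coloring (C : GraphClass) (x : ℕ)
    (hx : ∀ (n : ℕ), ∀ G ∈ C n, chiAcyc G ≤ x) (n : ℕ) (G : SimpleGraph (Fin n)) (hG : G ∈ C n) :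
    ∃ c : Fin n → Fin x, IsAcyclicColoring G c := by
  have hne : {m | ∃ c : Fin n → Fin m, IsAcyclicColoring G c}.Nonempty := by
    refine ⟨n, id, fun u v h => h.ne, fun i j => ?_⟩
    apply SimpleGraph.IsAcyclic.of_card_le_two
    have : {v : Fin n | id v = i ∨ id v = j} = {i, j} := by ext; simp
    rw [ENat.card_coe_set_eq, this]
    refine (Set.encard_insert_le _ _).trans ?_
    rw [Set.encard_singleton]
    norm_num
  obtain ⟨c, hc1, hc2⟩ := Nat.sInf_mem hne
  have hle : chiAcyc G ≤ x := hx n G hG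
  refine ⟨fun v => Fin.castLE hle (c v), fun u v h h' => hc1 u v h (Fin.castLE_injective hle h'),
    fun i j => ?_⟩
  by_cases hi : ∃ i', Fin.castLE hle i' = i
  · obtain ⟨i', rfl⟩ := hi
    by_cases hj : ∃ j', Fin.castLE hle j' = j
    · obtain ⟨j', rfl⟩ := hj
      refine (hc2 i' j').embedding (SimpleGraph.induceHomOfLE G ?_)
      rintro v (hv | hv)
      · exact Or.inl (Fin.castLE_injective hle hv)
      · exact Or.inr (Fin.castLE_injective hle hv)
    · refine (hc2 i' i').embedding (SimpleGraph.induceHomOfLE G ?_)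
      rintro v (hv | hv)
      · exact Or.inl (Fin.castLE_injective hle hv)
      · exact absurd ⟨_, hv⟩ hj
  · by_cases hj : ∃ j', Fin.castLE hle j' = j
    · obtain ⟨j', rfl⟩ := hj
      refine (hc2 j' j').embedding (SimpleGraph.induceHomOfLE G ?_)
      rintro v (hv | hv)
      · exact absurd ⟨_, hv⟩ hi
      · exact Or.inl (Fin.castLE_injective hle hv)
    · have : IsEmpty {v | Fin.castLE hle (c v) = i ∨ Fin.castLE hle (c v) = j} := by
        refine ⟨?_⟩
        rintro ⟨v, hv | hv⟩
        · exact hi ⟨_, hv⟩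
        · exact hj ⟨_, hv⟩
      exact SimpleGraph.IsAcyclic.of_subsingleton

/-- Colouring the minor obtained by contracting pairwise disjoint spiders. -/
lemma exists_spider_forests (C : GraphClass) (hMC : MinorClosed C) (x : ℕ)
    (hx : ∀ (n : ℕ), ∀ G ∈ C n, chiAcyc G ≤ x) (n : ℕ) (G : SimpleGraph (Fin n)) (hG : G ∈ C n)
    {ι : Type*} (near far ctr : ι → Fin n)
    (h1 : ∀ e, G.Adj (near e) (far e)) (h2 : ∀ e, G.Adj (near e) (ctr e))
    (h3 : ∀ e, ¬ G.Adj (far e) (ctr e))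
    (h4 : ∀ e f y z, (y = near e ∨ y = far e) → (z = near f ∨ z = far f) →
      (y = z ∨ G.Adj y z) → e = f)
    (h5 : ∀ e f, ctr e ≠ near f ∧ ctr e ≠ far f) :
    ∃ F : Fin x → Set (Fin n), (∀ k, PathForest G (F k)) ∧
      ∀ e, ∃ k, near e ∈ F k ∧ far e ∈ F k := by
  let B : Fin n → Set (Fin n) := fun w =>
    {z | z = w ∨ ∃ e, ctr e = w ∧ (z = near e ∨ z = far e)}
  let W : Set (Fin n) := Set.range ctr
  have hB : ∀ w ∈ W, ∀ w' ∈ W, ∀ z, z ∈ B w → z ∈ B w' → w = w' := by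
    rintro _ ⟨e, rfl⟩ _ ⟨f, rfl⟩ z (hz | ⟨e', he', hz⟩) (hz' | ⟨f', hf', hz'⟩)
    · exact hz.symm.trans hz'
    · rcases hz' with hz' | hz'
      · exact absurd (hz.symm.trans hz') (h5 _ _).1
      · exact absurd (hz.symm.trans hz') (h5 _ _).2
    · rcases hz with hz | hz
      · exact absurd (hz'.symm.trans hz) (h5 _ _).1
      · exact absurd (hz'.symm.trans hz) (h5 _ _).2
    · have := h4 e' f' z z hz hz' (Or.inl rfl)
      rw [← he', ← hf', this]
  have hconn : ∀ w, (G.induce (B w)).Connected := by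
    intro w
    have hw : w ∈ B w := Or.inl rfl
    rw [SimpleGraph.connected_iff_exists_forall_reachable]
    refine ⟨⟨w, hw⟩, ?_⟩
    have hn : ∀ e (hc : ctr e = w), (G.induce (B w)).Reachable ⟨w, hw⟩
        ⟨near e, Or.inr ⟨e, hc, Or.inl rfl⟩⟩ := by
      rintro e rfl
      apply SimpleGraph.Adj.reachable
      exact (h2 e).symm
    rintro ⟨z, rfl | ⟨e, hc, rfl | rfl⟩⟩
    · exact SimpleGraph.Reachable.refl _
    · exact hn e hc
    · refine (hn e hc).trans (SimpleGraph.Adj.reachable ?_)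
      exact h1 e
  let φ : W ≃ Fin (Nat.card W) := Finite.equivFin W
  let H : SimpleGraph (Fin (Nat.card W)) :=
    { Adj := fun i j => i ≠ j ∧ ∃ y ∈ B (φ.symm i), ∃ z ∈ B (φ.symm j), G.Adj y z
      symm := ⟨by
        rintro i j ⟨hij, y, hy, z, hz, hyz⟩
        exact ⟨hij.symm, z, hz, y, hy, hyz.symm⟩⟩
      loopless := ⟨fun i h => h.1 rfl⟩ }
  have hH : H ∈ C (Nat.card W) := by
    refine hMC _ n H G hG ⟨fun i => B (φ.symm i), ?_, ?_, ?_, ?_⟩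
    · intro i j hij
      rw [Function.onFun, Set.disjoint_left]
      intro z hz hz'
      apply hij
      have := hB _ (φ.symm i).2 _ (φ.symm j).2 z hz hz'
      exact φ.symm.injective (Subtype.ext this)
    · exact fun i => ⟨_, Or.inl rfl⟩
    · exact fun i => hconn _
    · exact fun i j hij => hij.2
  obtain ⟨d, hd, -⟩ := exists_coloring C x hx _ H hH
  let D : ι → Fin x := fun e => d (φ ⟨ctr e, e, rfl⟩)
  have key : ∀ e f, D e = D f → ∀ y ∈ B (ctr e), ∀ z ∈ B (ctr f), G.Adj y z → ctr e = ctr f := by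
    intro e f hD y hy z hz hyz
    by_contra hne
    refine hd (φ ⟨ctr e, e, rfl⟩) (φ ⟨ctr f, f, rfl⟩) ⟨?_, y, ?_, z, ?_, hyz⟩ hD
    · intro h
      exact hne (congrArg Subtype.val (φ.injective h))
    · rw [φ.symm_apply_apply]; exact hy
    · rw [φ.symm_apply_apply]; exact hz
  have mc : ∀ e, ctr e ∈ B (ctr e) := fun e => Or.inl rfl
  have mn : ∀ e, near e ∈ B (ctr e) := fun e => Or.inr ⟨e, rfl, Or.inl rfl⟩
  have mf : ∀ e, far e ∈ B (ctr e) := fun e => Or.inr ⟨e, rfl, Or.inr rfl⟩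
  let F : Fin x → Set (Fin n) := fun k => {z | ∃ e, D e = k ∧ (z = ctr e ∨ z = near e ∨ z = far e)}
  refine ⟨F, fun k => ⟨?_, ?_⟩, fun e => ⟨D e, ⟨e, rfl, by simp⟩, ⟨e, rfl, by simp⟩⟩⟩
  · let r : Fin n → ℕ := fun z => if z ∈ Set.range ctr then 0 else if z ∈ Set.range near then 1 else 2
    have rc : ∀ e, r (ctr e) = 0 := fun e => if_pos ⟨e, rfl⟩
    have rn : ∀ e, r (near e) = 1 := by
      intro e
      have a1 : near e ∉ Set.range ctr := by
        rintro ⟨f, hf⟩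
        exact (h5 f e).1 hf
      exact (if_neg a1).trans (if_pos ⟨e, rfl⟩)
    have rf : ∀ e, r (far e) = 2 := by
      intro e
      have a1 : far e ∉ Set.range ctr := by
        rintro ⟨f, hf⟩
        exact (h5 f e).2 hf
      have a2 : far e ∉ Set.range near := by
        rintro ⟨f, hf⟩
        have := h4 f e (near f) (far e) (Or.inl rfl) (Or.inr rfl) (Or.inl hf)
        subst this
        exact (h1 f).ne hf
      exact (if_neg a1).trans (if_neg a2)
    -- the unique lower neighbour
    have low : ∀ e, D e = k → ∀ a ∈ F k,
        (G.Adj (ctr e) a → r a ≤ 0 → False) ∧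
        (G.Adj (near e) a → r a ≤ 1 → a = ctr e) ∧
        (G.Adj (far e) a → r a ≤ 2 → a = near e) := by
      rintro e hek a ⟨f, hfk, rfl | rfl | rfl⟩
      · have hD : D e = D f := hek.trans hfk.symm
        refine ⟨fun h _ => ?_, fun h _ => ?_, fun h _ => ?_⟩
        · exact h.ne (key e f hD _ (mc e) _ (mc f) h)
        · exact (key e f hD _ (mn e) _ (mc f) h).symm
        · have := key e f hD _ (mf e) _ (mc f) h
          rw [← this] at h
          exact absurd h (h3 e)
      · rw [rn]
        refine ⟨fun h h' => by omega, fun h _ => ?_, fun h _ => ?_⟩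
        · have := h4 e f _ _ (Or.inl rfl) (Or.inl rfl) (Or.inr h)
          subst this
          exact absurd rfl h.ne
        · have := h4 e f _ _ (Or.inr rfl) (Or.inl rfl) (Or.inr h)
          rw [this]
      · rw [rf]
        refine ⟨fun h h' => by omega, fun h h' => by omega, fun h _ => ?_⟩
        have := h4 e f _ _ (Or.inr rfl) (Or.inr rfl) (Or.inr h)
        subst this
        exact absurd rfl h.ne
    apply acyclic_of_rank _ (fun z => r z.1)
    rintro ⟨v, e, hek, hv⟩ ⟨a, ha⟩ ⟨b, hb⟩ hva hvb ra rb
    have hva' : G.Adj v a := hva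
    have hvb' : G.Adj v b := hvb
    simp only at ra rb
    apply Subtype.ext
    show a = b
    rcases hv with rfl | rfl | rfl
    · rw [rc] at ra
      exact ((low e hek a ha).1 hva' ra).elim
    · rw [rn] at ra rb
      rw [(low e hek a ha).2.1 hva' ra, (low e hek b hb).2.1 hvb' rb]
    · rw [rf] at ra rb
      rw [(low e hek a ha).2.2 hva' ra, (low e hek b hb).2.2 hvb' rb]
  · rintro v ⟨e, hek, hv⟩
    have c1 : ctr e ∈ F k := ⟨e, hek, by simp⟩
    have c2 : near e ∈ F k := ⟨e, hek, by simp⟩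
    have c3 : far e ∈ F k := ⟨e, hek, by simp⟩
    rcases hv with rfl | rfl | rfl
    · exact ⟨_, c1, _, c2, _, c3, (h2 e).symm, h1 e, (h5 e e).2, Or.inl rfl⟩
    · exact ⟨_, c1, _, c2, _, c3, (h2 e).symm, h1 e, (h5 e e).2, Or.inr rfl⟩
    · exact ⟨_, c3, _, c2, _, c1, (h1 e).symm, h2 e, (h5 e e).2.symm, Or.inl rfl⟩

/-- An edge isolated inside `S`, with a vertex `w` adjacent to `u` but not to `v`. -/
def Pendant {V : Type*} (G : SimpleGraph V) (S : Set V) (u v w : V) : Prop :=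
  u ∈ S ∧ v ∈ S ∧ G.Adj u v ∧ (∀ z ∈ S, G.Adj u z → z = v) ∧ (∀ z ∈ S, G.Adj v z → z = u) ∧
    G.Adj u w ∧ ¬ G.Adj v w ∧ w ≠ v

/-- All valid edges inside an induced forest are covered by `x + 1` strong forests. -/
lemma cover_pair (C : GraphClass) (hMC : MinorClosed C) (x : ℕ)
    (hx : ∀ (n : ℕ), ∀ G ∈ C n, chiAcyc G ≤ x) (n : ℕ) (G : SimpleGraph (Fin n)) (hG : G ∈ C n)
    (S : Set (Fin n)) (hS : (G.induce S).IsAcyclic) :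
    ∃ F : Option (Fin x) → Set (Fin n), (∀ k, IsStrongForest G 2 (F k)) ∧
      ∀ e, KValid G 2 e → e ∈ forestEdges G S → ∃ k, e ∈ forestEdges G (F k) := by
  let A : Set (Fin n) := {v | ∃ a ∈ S, ∃ b ∈ S, ∃ c ∈ S,
    G.Adj a b ∧ G.Adj b c ∧ a ≠ c ∧ (v = a ∨ v = b)}
  have hAS : A ⊆ S := by
    rintro v ⟨a, ha, b, hb, c, hc, -, -, -, rfl | rfl⟩ <;> assumption
  have hA : PathForest G A := by
    refine ⟨hS.embedding (SimpleGraph.induceHomOfLE G hAS), ?_⟩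
    rintro v ⟨a, ha, b, hb, c, hc, hab, hbc, hac, hv⟩
    exact ⟨a, ⟨a, ha, b, hb, c, hc, hab, hbc, hac, Or.inl rfl⟩,
      b, ⟨a, ha, b, hb, c, hc, hab, hbc, hac, Or.inr rfl⟩,
      c, ⟨c, hc, b, hb, a, ha, hbc.symm, hab.symm, hac.symm, Or.inl rfl⟩,
      hab, hbc, hac, hv⟩
  let ι := {e : Sym2 (Fin n) // ∃ u v w, e = s(u, v) ∧ Pendant G S u v w}
  choose near far ctr heq hP using fun e : ι => e.2
  obtain ⟨F, hF, hcov⟩ := exists_spider_forests C hMC x hx n G hG near far ctr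
    (fun e => (hP e).2.2.1) (fun e => (hP e).2.2.2.2.2.1) (fun e => (hP e).2.2.2.2.2.2.1)
    (by
      intro e f y z hy hz hyz
      obtain ⟨e1, e2, e3, e4, e5, -⟩ := hP e
      obtain ⟨f1, f2, f3, f4, f5, -⟩ := hP f
      have hz' : z = near e ∨ z = far e := by
        have hzS : z ∈ S := by rcases hz with rfl | rfl <;> assumption
        rcases hyz with rfl | hyz
        · exact hy
        · rcases hy with rfl | rfl
          · exact Or.inr (e4 z hzS hyz)
          · exact Or.inl (e5 z hzS hyz)
      apply Subtype.ext
      rw [heq e, heq f]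
      rcases hz' with hz' | hz' <;> rcases hz with hz | hz
      · have h : near e = near f := hz'.symm.trans hz
        rw [h] at e3 ⊢
        rw [f4 _ e2 e3]
      · have h : near e = far f := hz'.symm.trans hz
        rw [h] at e3 ⊢
        rw [f5 _ e2 e3, Sym2.eq_swap]
      · have h : far e = near f := hz'.symm.trans hz
        rw [h] at e3 ⊢
        rw [f4 _ e1 e3.symm, Sym2.eq_swap]
      · have h : far e = far f := hz'.symm.trans hz
        rw [h] at e3 ⊢
        rw [f5 _ e1 e3.symm])
    (by
      intro e f
      obtain ⟨e1, e2, e3, e4, e5, e6, e7, e8⟩ := hP e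
      obtain ⟨f1, f2, f3, f4, f5, -⟩ := hP f
      have : ctr e ∉ S := fun h => e8 (e4 _ h e6)
      exact ⟨fun h => this (h ▸ f1), fun h => this (h ▸ f2)⟩)
  refine ⟨fun k => k.elim A F, ?_, ?_⟩
  · rintro (_ | k)
    · exact hA.strong
    · exact (hF k).strong
  · intro e hval he
    induction e using Sym2.ind with
    | _ u v =>
    obtain ⟨huv, w, hw⟩ := exists_of_valid hval
    have hu : u ∈ S := he.2 u (by simp)
    have hv : v ∈ S := he.2 v (by simp)
    by_cases h1 : ∃ z ∈ S, G.Adj u z ∧ z ≠ v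
    · obtain ⟨z, hz, huz, hne⟩ := h1
      refine ⟨none, huv, ?_⟩
      intro y hy
      rcases Sym2.mem_iff.1 hy with rfl | rfl
      · exact ⟨_, hv, _, hu, z, hz, huv.symm, huz, hne.symm, Or.inr rfl⟩
      · exact ⟨_, hv, _, hu, z, hz, huv.symm, huz, hne.symm, Or.inl rfl⟩
    by_cases h2 : ∃ z ∈ S, G.Adj v z ∧ z ≠ u
    · obtain ⟨z, hz, huz, hne⟩ := h2
      refine ⟨none, huv, ?_⟩
      intro y hy
      rcases Sym2.mem_iff.1 hy with rfl | rfl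
      · exact ⟨_, hu, _, hv, z, hz, huv, huz, hne.symm, Or.inl rfl⟩
      · exact ⟨_, hu, _, hv, z, hz, huv, huz, hne.symm, Or.inr rfl⟩
    push Not at h1 h2
    have hmem : ∃ u' v' w', s(u, v) = s(u', v') ∧ Pendant G S u' v' w' := by
      rcases hw with ⟨a1, a2, a3⟩ | ⟨a1, a2, a3⟩
      · exact ⟨u, v, w, rfl, hu, hv, huv, h1, h2, a1, a2, a3⟩
      · exact ⟨v, u, w, Sym2.eq_swap, hv, hu, huv.symm, h2, h1, a1, a2, a3⟩
    obtain ⟨k, hk1, hk2⟩ := hcov ⟨s(u, v), hmem⟩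
    refine ⟨some k, huv, ?_⟩
    intro y hy
    have hh := heq ⟨s(u, v), hmem⟩
    simp only at hh
    rw [hh] at hy
    rcases Sym2.mem_iff.1 hy with rfl | rfl
    · exact hk1
    · exact hk2

lemma fStrong_two_le (C : GraphClass) (hMC : MinorClosed C) (x : ℕ)
    (hx : ∀ (n : ℕ), ∀ G ∈ C n, chiAcyc G ≤ x) (n : ℕ) (G : SimpleGraph (Fin n)) (hG : G ∈ C n) :
    fStrong G 2 ≤ x.choose 2 * (x + 1) := by
  obtain ⟨c, hc1, hc2⟩ := exists_coloring C x hx n G hG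
  let P := {s : Finset (Fin x) // s ∈ Finset.powersetCard 2 Finset.univ}
  have hP : ∀ s : P, (G.induce {v | c v ∈ s.1}).IsAcyclic := by
    rintro ⟨s, hs⟩
    obtain ⟨i, j, -, rfl⟩ := Finset.card_eq_two.1 (Finset.mem_powersetCard.1 hs).2
    refine (hc2 i j).embedding (SimpleGraph.induceHomOfLE G ?_)
    intro v hv
    have hv' : c v ∈ ({i, j} : Finset (Fin x)) := hv
    simpa using hv'
  choose F hF hcov using fun s : P => cover_pair C hMC x hx n G hG _ (hP s)
  have hcard : Fintype.card (P × Option (Fin x)) = x.choose 2 * (x + 1) := by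
    rw [Fintype.card_prod, Fintype.card_option, Fintype.card_fin, Fintype.card_coe,
      Finset.card_powersetCard, Finset.card_univ, Fintype.card_fin]
  let ψ := Fintype.equivFinOfCardEq hcard
  apply Nat.sInf_le
  refine ⟨fun i => F (ψ.symm i).1 (ψ.symm i).2, fun i => hF _ _, ?_⟩
  intro e he
  have hedge : e ∈ G.edgeSet := by
    obtain ⟨S, -, h⟩ := he
    exact h.1
  have : ∃ s : P, e ∈ forestEdges G {v | c v ∈ s.1} := by
    induction e using Sym2.ind with
    | _ u v =>
    have huv : G.Adj u v := hedge
    refine ⟨⟨{c u, c v}, ?_⟩, huv, ?_⟩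
    · rw [Finset.mem_powersetCard]
      exact ⟨Finset.subset_univ _, Finset.card_pair (hc1 u v huv)⟩
    · intro y hy
      rcases Sym2.mem_iff.1 hy with rfl | rfl <;> simp
  obtain ⟨s, hs⟩ := this
  obtain ⟨k, hk⟩ := hcov s e he hs
  exact ⟨ψ (s, k), by simpa using hk⟩

/-- Let `C` be a minor-closed class of finite simple graphs all of whose
members have acyclic chromatic number at most `x`.  Then every `G ∈ C` satisfies
`f₂(G) ≤ (x choose 2) * (3 * (x choose 2) + 1)` if `x ≤ 9`, and
`f₂(G) ≤ (x choose 2) * (12x + 1)` if `x ≥ 9`. -/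
theorem fStrong_two_le_of_minorClosed (C : GraphClass) (hMC : MinorClosed C) (x : ℕ)
    (hx : ∀ (n : ℕ), ∀ G ∈ C n, chiAcyc G ≤ x) :
    ∀ (n : ℕ), ∀ G ∈ C n,
      (x ≤ 9 → fStrong G 2 ≤ x.choose 2 * (3 * x.choose 2 + 1)) ∧
      (9 ≤ x → fStrong G 2 ≤ x.choose 2 * (12 * x + 1)) := by
  intro n G hG
  have h := fStrong_two_le C hMC x hx n G hG
  have h2 : x ≤ 3 * x.choose 2 ∨ x.choose 2 = 0 := by
    rcases Nat.lt_or_ge x 2 with h | h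
    · exact Or.inr (Nat.choose_eq_zero_of_lt h)
    · left
      obtain ⟨y, rfl⟩ := Nat.exists_eq_add_of_le' h
      have h3 : (y + 2).choose 2 = (y + 1) + (y + 1).choose 2 := by
        rw [Nat.choose_succ_succ' (y + 1) 1, Nat.choose_one_right]
      omega
  refine ⟨fun _ => h.trans ?_, fun _ => h.trans (Nat.mul_le_mul_left _ (by omega))⟩
  rcases h2 with h2 | h2
  · exact Nat.mul_le_mul_left _ (by omega)
  · simp [h2]
end InducedArboricity
end

section
/- Every planar finite simple graph G satisfies f_2(G) ≤ 310. -/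
open scoped Classical

namespace InducedArboricity

section PartA
variable {V : Type} {G : SimpleGraph V}

/-- Reachability inside the set `S`. -/
def RS (G : SimpleGraph V) (S : Set V) : V → V → Prop :=
  Relation.ReflTransGen (fun a b => a ∈ S ∧ b ∈ S ∧ G.Adj a b)

/-- `S` is nonempty and connected. -/
def Cn (G : SimpleGraph V) (S : Set V) : Prop :=
  S.Nonempty ∧ ∀ a ∈ S, ∀ b ∈ S, RS G S a b

/-- `S` and `T` are joined by an edge. -/
def Tch (G : SimpleGraph V) (S T : Set V) : Prop := ∃ x ∈ S, ∃ y ∈ T, G.Adj x y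

theorem Tch.symm {S T : Set V} (h : Tch G S T) : Tch G T S := by
  obtain ⟨x, hx, y, hy, h⟩ := h
  exact ⟨y, hy, x, hx, h.symm⟩

theorem Tch.mono {S T S' T' : Set V} (h : Tch G S T) (h1 : S ⊆ S') (h2 : T ⊆ T') :
    Tch G S' T' := by
  obtain ⟨x, hx, y, hy, h⟩ := h
  exact ⟨x, h1 hx, y, h2 hy, h⟩

theorem RS.refl' {S : Set V} (a : V) : RS G S a a := Relation.ReflTransGen.refl

theorem RS.symm' {S : Set V} {a b : V} (h : RS G S a b) : RS G S b a := by
  unfold RS at *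
  induction h with
  | refl => exact Relation.ReflTransGen.refl
  | tail _ h2 ih => exact Relation.ReflTransGen.head ⟨h2.2.1, h2.1, h2.2.2.symm⟩ ih

theorem RS.trans' {S : Set V} {a b c : V} (h : RS G S a b) (h' : RS G S b c) : RS G S a c :=
  Relation.ReflTransGen.trans h h'

theorem RS.mono' {S T : Set V} {a b : V} (h : RS G S a b) (hST : S ⊆ T) : RS G T a b := by
  unfold RS at *
  induction h with
  | refl => exact Relation.ReflTransGen.refl
  | tail _ h2 ih => exact ih.tail ⟨hST h2.1, hST h2.2.1, h2.2.2⟩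

theorem RS.mem {S : Set V} {a b : V} (h : RS G S a b) (ha : a ∈ S) : b ∈ S := by
  unfold RS at *
  induction h with
  | refl => exact ha
  | tail _ h2 _ => exact h2.2.1

theorem RS.mem_left {S : Set V} {a b : V} (h : RS G S a b) (hb : b ∈ S) : a ∈ S :=
  h.symm'.mem hb

theorem RS.edge {S : Set V} {a b : V} (ha : a ∈ S) (hb : b ∈ S) (h : G.Adj a b) : RS G S a b :=
  Relation.ReflTransGen.single ⟨ha, hb, h⟩

theorem RS.tail' {S : Set V} {a b c : V} (h : RS G S a b) (hb : b ∈ S) (hc : c ∈ S)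
    (hbc : G.Adj b c) : RS G S a c := h.trans' (RS.edge hb hc hbc)

theorem Cn.of_root {S : Set V} (r : V) (hr : r ∈ S) (h : ∀ z ∈ S, RS G S r z) : Cn G S :=
  ⟨⟨r, hr⟩, fun a ha b hb => (h a ha).symm'.trans' (h b hb)⟩

theorem Cn.singleton (r : V) : Cn G {r} := by
  refine Cn.of_root r rfl ?_
  rintro z rfl
  exact RS.refl' _

theorem Cn.union {S T : Set V} (hS : Cn G S) (hT : Cn G T) (h : Tch G S T) : Cn G (S ∪ T) := by
  obtain ⟨x, hx, y, hy, h⟩ := h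
  refine Cn.of_root x (Or.inl hx) ?_
  rintro z (hz | hz)
  · exact (hS.2 x hx z hz).mono' Set.subset_union_left
  · have h1 : RS G (S ∪ T) x y := RS.edge (Set.mem_union_left _ hx) (Set.mem_union_right _ hy) h
    exact h1.trans' ((hT.2 y hy z hz).mono' Set.subset_union_right)

/-- The component of `v` in `S`. -/
def cmp (G : SimpleGraph V) (S : Set V) (v : V) : Set V := {z | RS G S v z}

theorem cmp_subset {S : Set V} {v : V} (hv : v ∈ S) : cmp G S v ⊆ S := fun _ hz => RS.mem hz hv

theorem mem_cmp_self {S : Set V} {v : V} : v ∈ cmp G S v := RS.refl' _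

theorem cmp_eq {S : Set V} {v z : V} (h : z ∈ cmp G S v) : cmp G S z = cmp G S v := by
  ext y
  exact ⟨fun hy => RS.trans' h hy, fun hy => RS.trans' (RS.symm' h) hy⟩

theorem RS_in_cmp {S : Set V} {v z : V} (h : RS G S v z) : RS G (cmp G S v) v z := by
  have h0 := h
  unfold RS at h
  induction h with
  | refl => exact RS.refl' _
  | tail h1 h2 ih =>
    exact (ih h1).tail' h1 h0 h2.2.2

theorem Cn_cmp {S : Set V} {v : V} : Cn G (cmp G S v) :=
  Cn.of_root v mem_cmp_self fun _ hz => RS_in_cmp hz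

theorem RS_reach {S : Set V} {a b : V} (h : RS G S a b) (ha : a ∈ S) (hb : b ∈ S) :
    (G.induce S).Reachable ⟨a, ha⟩ ⟨b, hb⟩ := by
  unfold RS at h
  induction h with
  | refl => exact SimpleGraph.Reachable.refl _
  | tail h1 h2 ih =>
    refine (ih h2.1).trans (SimpleGraph.Adj.reachable ?_)
    simpa using h2.2.2

theorem reach_RS {S : Set V} {a b : S} (h : (G.induce S).Reachable a b) :
    RS G S a b := by
  obtain ⟨w⟩ := h
  induction w with
  | nil => exact RS.refl' _
  | cons h _ ih => exact (RS.edge (Subtype.property _) (Subtype.property _) (by simpa using h)).trans' ih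

theorem Cn.connected {S : Set V} (h : Cn G S) : (G.induce S).Connected := by
  have : Nonempty S := h.1.to_subtype
  exact ⟨fun a b => RS_reach (h.2 a a.2 b b.2) a.2 b.2⟩

theorem Cn_of_connected {S : Set V} (h : (G.induce S).Connected) : Cn G S := by
  obtain ⟨r⟩ := h.nonempty
  exact Cn.of_root r r.2 fun z hz => reach_RS (h.preconnected r ⟨z, hz⟩)

/-- no `K₃,₃` minor -/
def NoK (G : SimpleGraph V) : Prop := ¬ IsMinorOf (completeBipartiteGraph (Fin 3) (Fin 3)) G

theorem k33 (hG : NoK G) {X₁ X₂ X₃ Y₁ Y₂ Y₃ : Set V}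
    (cX₁ : Cn G X₁) (cX₂ : Cn G X₂) (cX₃ : Cn G X₃) (cY₁ : Cn G Y₁) (cY₂ : Cn G Y₂) (cY₃ : Cn G Y₃)
    (d12 : Disjoint X₁ X₂) (d13 : Disjoint X₁ X₃) (d23 : Disjoint X₂ X₃)
    (e12 : Disjoint Y₁ Y₂) (e13 : Disjoint Y₁ Y₃) (e23 : Disjoint Y₂ Y₃)
    (f11 : Disjoint X₁ Y₁) (f12 : Disjoint X₁ Y₂) (f13 : Disjoint X₁ Y₃)
    (f21 : Disjoint X₂ Y₁) (f22 : Disjoint X₂ Y₂) (f23 : Disjoint X₂ Y₃)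
    (f31 : Disjoint X₃ Y₁) (f32 : Disjoint X₃ Y₂) (f33 : Disjoint X₃ Y₃)
    (t11 : Tch G X₁ Y₁) (t12 : Tch G X₁ Y₂) (t13 : Tch G X₁ Y₃)
    (t21 : Tch G X₂ Y₁) (t22 : Tch G X₂ Y₂) (t23 : Tch G X₂ Y₃)
    (t31 : Tch G X₃ Y₁) (t32 : Tch G X₃ Y₂) (t33 : Tch G X₃ Y₃) : False := by
  apply hG
  refine ⟨Sum.elim ![X₁, X₂, X₃] ![Y₁, Y₂, Y₃], ?_, ?_, ?_, ?_⟩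
  · rintro (i | i) (j | j) hij <;> fin_cases i <;> fin_cases j <;>
      simp [Function.onFun] at hij ⊢ <;> first | assumption | (apply Disjoint.symm; assumption)
  · rintro (i | i) <;> fin_cases i
    exacts [cX₁.1, cX₂.1, cX₃.1, cY₁.1, cY₂.1, cY₃.1]
  · rintro (i | i) <;> fin_cases i
    exacts [cX₁.connected, cX₂.connected, cX₃.connected, cY₁.connected, cY₂.connected,
      cY₃.connected]
  · rintro (i | i) (j | j) hij
    · simp at hij
    · fin_cases i <;> fin_cases j
      exacts [t11, t12, t13, t21, t22, t23, t31, t32, t33]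
    · fin_cases i <;> fin_cases j
      exacts [t11.symm, t21.symm, t31.symm, t12.symm, t22.symm, t32.symm, t13.symm, t23.symm,
        t33.symm]
    · simp at hij

/-- last hit -/
theorem last_hit {S U : Set V} {a b : V} (h : RS G S a b) :
    (a ∉ U ∧ RS G (S \ U) a b) ∨
      ∃ t ∈ U, t = b ∨ ∃ t' ∈ S \ U, G.Adj t t' ∧ RS G (S \ U) t' b := by
  unfold RS at h
  induction h using Relation.ReflTransGen.head_induction_on with
  | refl =>
    by_cases hb : b ∈ U
    · exact Or.inr ⟨b, hb, Or.inl rfl⟩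
    · exact Or.inl ⟨hb, RS.refl' _⟩
  | @head a c h1 h2 ih =>
    rcases ih with ⟨hc, hr⟩ | h
    · by_cases ha : a ∈ U
      · exact Or.inr ⟨a, ha, Or.inr ⟨c, ⟨h1.2.1, hc⟩, h1.2.2, hr⟩⟩
      · have h3 : RS G (S \ U) a c :=
          RS.edge (Set.mem_sdiff _ |>.2 ⟨h1.1, ha⟩) (Set.mem_sdiff _ |>.2 ⟨h1.2.1, hc⟩) h1.2.2
        exact Or.inl ⟨ha, h3.trans' hr⟩
    · exact Or.inr h

theorem Cn_chain (l : List V) (hl : l ≠ []) (h : l.IsChain G.Adj) : Cn G {x | x ∈ l} := by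
  induction l with
  | nil => exact absurd rfl hl
  | cons a l ih =>
    cases l with
    | nil => simpa using Cn.singleton a
    | cons b l =>
      have h' := List.isChain_cons_cons.1 h
      have := (Cn.singleton a).union (ih (by simp) h'.2) ⟨a, rfl, b, by simp, h'.1⟩
      convert this using 1
      ext x; simp

end PartA

section PartB
variable {V : Type} {G : SimpleGraph V}

/-- `p 0, …, p n` is a walk in `C`. -/
def Wk (G : SimpleGraph V) (C : Set V) (p : ℕ → V) (n : ℕ) : Prop :=
  (∀ i ≤ n, p i ∈ C) ∧ ∀ i < n, G.Adj (p i) (p (i + 1))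

/-- `p 0, …, p n` is a shortest walk in `C`. -/
def Geo (G : SimpleGraph V) (C : Set V) (p : ℕ → V) (n : ℕ) : Prop :=
  Wk G C p n ∧ ∀ m q, Wk G C q m → q 0 = p 0 → q m = p n → n ≤ m

/-- concatenation -/
def cat (p : ℕ → V) (i : ℕ) (q : ℕ → V) : ℕ → V := fun k => if k ≤ i then p k else q (k - i)

theorem cat_zero (p : ℕ → V) (i : ℕ) (q : ℕ → V) : cat p i q 0 = p 0 := by simp [cat]

theorem cat_le (p : ℕ → V) {i : ℕ} (q : ℕ → V) {k : ℕ} (h : k ≤ i) : cat p i q k = p k := by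
  simp [cat, h]

theorem cat_add {p : ℕ → V} {i : ℕ} {q : ℕ → V} (h : p i = q 0) (m : ℕ) :
    cat p i q (i + m) = q m := by
  rcases Nat.eq_zero_or_pos m with rfl | hm
  · simp [cat, h]
  · have : ¬ (i + m ≤ i) := by omega
    simp [cat, this]

theorem Wk.cat {C : Set V} {p q : ℕ → V} {i m : ℕ} (hp : Wk G C p i) (hq : Wk G C q m)
    (h : p i = q 0) : Wk G C (cat p i q) (i + m) := by
  refine ⟨fun k hk => ?_, fun k hk => ?_⟩
  · rcases le_or_gt k i with hki | hki
    · rw [cat_le _ _ hki]; exact hp.1 k hki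
    · obtain ⟨d, rfl⟩ := Nat.exists_eq_add_of_lt hki
      rw [add_assoc, cat_add h]; exact hq.1 _ (by omega)
  · rcases lt_or_ge k i with hki | hki
    · rw [cat_le _ _ hki.le, cat_le _ _ (by omega)]; exact hp.2 k hki
    · obtain ⟨d, rfl⟩ := Nat.exists_eq_add_of_le hki
      rw [add_assoc, cat_add h, cat_add h]; exact hq.2 _ (by omega)

theorem Wk.shift {C : Set V} {p : ℕ → V} {n : ℕ} (hp : Wk G C p n) (j : ℕ) (hj : j ≤ n) :
    Wk G C (fun k => p (j + k)) (n - j) :=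
  ⟨fun k hk => hp.1 _ (by omega), fun k hk => hp.2 _ (by omega)⟩

theorem Wk.take {C : Set V} {p : ℕ → V} {n : ℕ} (hp : Wk G C p n) (j : ℕ) (hj : j ≤ n) :
    Wk G C p j :=
  ⟨fun k hk => hp.1 _ (by omega), fun k hk => hp.2 _ (by omega)⟩

theorem Geo.sub {C : Set V} {p : ℕ → V} {n : ℕ} (hp : Geo G C p n) {i j : ℕ}
    (hij : i ≤ j) (hj : j ≤ n) {m : ℕ} {q : ℕ → V} (hq : Wk G C q m) (h0 : q 0 = p i)
    (hm : q m = p j) : j ≤ i + m := by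
  have h1 := hq.cat (hp.1.shift j hj) (by simpa using hm)
  have h2 := (hp.1.take i (by omega)).cat h1 (by rw [cat_zero, h0])
  have h3 := hp.2 _ _ h2 (by rw [cat_zero]) (by
    rw [cat_add (by rw [cat_zero, h0]), cat_add (by simpa using hm)]
    congr 1; omega)
  omega

theorem Geo.near {C : Set V} {p : ℕ → V} {n : ℕ} (hp : Geo G C p n) {i j : ℕ}
    (hij : i ≤ j) (hj : j ≤ n) {v : V} (hv : v ∈ C) (h1 : G.Adj v (p i)) (h2 : G.Adj v (p j)) :
    j ≤ i + 2 := by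
  refine hp.sub hij hj (m := 2) (q := fun k => if k = 0 then p i else if k = 1 then v else p j)
    ⟨?_, ?_⟩ (by simp) (by simp)
  · intro k hk
    have h1 := hp.1.1 i (by omega)
    have h2 := hp.1.1 j hj
    dsimp only
    split_ifs <;> assumption
  · intro k hk
    interval_cases k
    · simpa using h1.symm
    · simpa using h2

theorem Geo.adj {C : Set V} {p : ℕ → V} {n : ℕ} (hp : Geo G C p n) {i j : ℕ}
    (hij : i ≤ j) (hj : j ≤ n) (h1 : G.Adj (p i) (p j)) :
    j ≤ i + 1 := by
  refine hp.sub hij hj (m := 1) (q := fun k => if k = 0 then p i else p j)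
    ⟨?_, ?_⟩ (by simp) (by simp)
  · intro k hk
    have h1 := hp.1.1 i (by omega)
    have h2 := hp.1.1 j hj
    dsimp only
    split_ifs <;> assumption
  · intro k hk
    interval_cases k
    simpa using h1

theorem Geo.inj {C : Set V} {p : ℕ → V} {n : ℕ} (hp : Geo G C p n) {i j : ℕ}
    (hi : i ≤ n) (hj : j ≤ n) (h : p i = p j) : i = j := by
  have key : ∀ i j : ℕ, i ≤ j → j ≤ n → p i = p j → j ≤ i := by
    intro i j hij hj h
    refine hp.sub hij hj (m := 0) (q := fun _ => p i) ⟨?_, ?_⟩ (by simp) (by simpa using h)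
    · intro k hk
      exact hp.1.1 i (by omega)
    · intro k hk; omega
  rcases le_total i j with hij | hij
  · exact le_antisymm hij (key _ _ hij hj h)
  · exact le_antisymm (key _ _ hij hi h.symm) hij

theorem Wk.rev {C : Set V} {p : ℕ → V} {n : ℕ} (hp : Wk G C p n) :
    Wk G C (fun k => p (n - k)) n := by
  refine ⟨fun i hi => hp.1 _ (by omega), fun i hi => ?_⟩
  have := hp.2 (n - (i + 1)) (by omega)
  rw [show n - (i + 1) + 1 = n - i by omega] at this
  exact this.symm

theorem Geo.rev {C : Set V} {p : ℕ → V} {n : ℕ} (hp : Geo G C p n) :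
    Geo G C (fun k => p (n - k)) n := by
  refine ⟨hp.1.rev, fun m q hq h0 hm => hp.2 m _ hq.rev ?_ ?_⟩
  · simpa using hm
  · simpa using h0

theorem exists_Wk {C : Set V} {a b : V} (ha : a ∈ C) (h : RS G C a b) :
    ∃ n p, Wk G C p n ∧ p 0 = a ∧ p n = b := by
  unfold RS at h
  induction h with
  | refl => exact ⟨0, fun _ => a, ⟨fun _ _ => ha, fun _ h => by omega⟩, rfl, rfl⟩
  | @tail b c h1 h2 ih =>
    obtain ⟨n, p, hp, h0, hn⟩ := ih
    have hq : Wk G C (fun k => if k = 0 then b else c) 1 := by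
      refine ⟨fun i hi => ?_, fun i hi => ?_⟩
      · have := h2.1
        have := h2.2.1
        dsimp only
        split_ifs <;> assumption
      · interval_cases i
        simpa using h2.2.2
    refine ⟨n + 1, _, hp.cat hq (by simpa using hn), ?_, ?_⟩
    · rw [cat_zero, h0]
    · rw [cat_add (by simpa using hn)]; simp

theorem exists_Geo {C : Set V} (hC : Cn G C) {a b : V} (ha : a ∈ C) (hb : b ∈ C) :
    ∃ n p, Geo G C p n ∧ p 0 = a ∧ p n = b := by
  have h := exists_Wk ha (hC.2 a ha b hb)
  obtain ⟨p, hp, h0, hn⟩ := Nat.find_spec h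
  refine ⟨Nat.find h, p, ⟨hp, fun m q hq h1 h2 => Nat.find_min' h ⟨q, hq, ?_, ?_⟩⟩, h0, hn⟩
  · rw [h1, h0]
  · rw [h2, hn]

/-- a segment of a walk -/
def seg (p : ℕ → V) (a b : ℕ) : Set V := {x | ∃ i, a ≤ i ∧ i ≤ b ∧ p i = x}

theorem seg_sub {C : Set V} {p : ℕ → V} {n : ℕ} (hp : Wk G C p n) {a b : ℕ} (hb : b ≤ n) :
    seg p a b ⊆ C := by
  rintro x ⟨i, _, h2, rfl⟩
  exact hp.1 i (by omega)

theorem Cn_seg {C : Set V} {p : ℕ → V} {n : ℕ} (hp : Wk G C p n) {a b : ℕ} (hab : a ≤ b)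
    (hb : b ≤ n) : Cn G (seg p a b) := by
  refine Cn.of_root (p a) ⟨a, le_rfl, hab, rfl⟩ ?_
  rintro x ⟨i, h1, h2, rfl⟩
  induction i, h1 using Nat.le_induction with
  | base => exact RS.refl' _
  | succ i hi ih =>
    exact (ih (by omega)).tail' ⟨i, hi, by omega, rfl⟩ ⟨i + 1, by omega, h2, rfl⟩
      (hp.2 i (by omega))

theorem seg_rev (p : ℕ → V) (n : ℕ) : seg (fun k => p (n - k)) 0 n = seg p 0 n := by
  ext x
  constructor
  · rintro ⟨i, _, h, rfl⟩
    exact ⟨n - i, by omega, by omega, rfl⟩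
  · rintro ⟨i, _, h, rfl⟩
    refine ⟨n - i, by omega, by omega, ?_⟩
    dsimp only
    congr 1; omega

theorem cmp_Tch {C P : Set V} (hC : Cn G C) (hP : P ⊆ C) (hP0 : P.Nonempty) {v : V}
    (hv : v ∈ C \ P) : Tch G (cmp G (C \ P) v) P := by
  obtain ⟨p, hp⟩ := hP0
  rcases last_hit (U := P) (hC.2 p (hP hp) v hv.1) with ⟨h, _⟩ | ⟨t, ht, rfl | ⟨t', ht', h1, h2⟩⟩
  · exact absurd hp h
  · exact absurd ht hv.2
  · exact ⟨t', h2.symm', t, ht, h1.symm⟩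

/-- the vertices of `C \ P` whose component touches `B` -/
def Wset (G : SimpleGraph V) (C B P : Set V) : Set V :=
  {v | v ∈ C \ P ∧ Tch G (cmp G (C \ P) v) B}

theorem key_end (hG : NoK G) {C A B : Set V} (hC : Cn G C) {u w : V} (huC : u ∉ C) (hwC : w ∉ C)
    (huw : u ≠ w) (hAC : Disjoint A C) (hBC : Disjoint B C) (hAB : Disjoint A B)
    (huA : u ∉ A) (hwA : w ∉ A) (huB : u ∉ B) (hwB : w ∉ B)
    (hA : (A = ∅ ∧ G.Adj u w) ∨ (Cn G A ∧ Tch G {u} A ∧ Tch G {w} A))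
    (hB : Cn G B) (htw : Tch G {w} B)
    {p : ℕ → V} {n : ℕ} (hp : Geo G C p n) (hu : G.Adj u (p 0)) (hw : G.Adj w (p n))
    {v x : V} (hv : v ∈ C \ seg p 0 n) (hDB : Tch G (cmp G (C \ seg p 0 n) v) B)
    (hx : x ∈ cmp G (C \ seg p 0 n) v) (hux : G.Adj u x) :
    ∃ n' p', Geo G C p' n' ∧ G.Adj u (p' 0) ∧ G.Adj w (p' n') ∧
      Wset G C B (seg p' 0 n') ⊂ Wset G C B (seg p 0 n) := by
  have hxC : x ∈ C \ seg p 0 n := cmp_subset hv hx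
  have hcx := cmp_eq hx
  rw [← hcx] at hDB
  obtain ⟨m, q, hq, hq0, hqm⟩ := exists_Geo hC hxC.1 (hp.1.1 n le_rfl)
  have hex : ∃ k, q k ∈ seg p 0 n := ⟨m, n, by omega, le_rfl, hqm.symm⟩
  obtain ⟨k, hk, hkmin⟩ : ∃ k, q k ∈ seg p 0 n ∧ ∀ i < k, q i ∉ seg p 0 n :=
    ⟨Nat.find hex, Nat.find_spec hex, fun i hi => Nat.find_min hex hi⟩
  have hkm : k ≤ m := by
    by_contra hlt
    exact hkmin m (by omega) ⟨n, by omega, le_rfl, hqm.symm⟩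
  have hk0 : k ≠ 0 := by
    rintro rfl
    rw [hq0] at hk
    exact hxC.2 hk
  obtain ⟨l, _, hln, hl⟩ := hk
  have hqC : ∀ i < k, q i ∈ C \ seg p 0 n := fun i hi => ⟨hq.1.1 i (by omega), hkmin i hi⟩
  -- the new path
  set p' := cat q k (fun j => p (l + j)) with hp'
  have hglue : q k = (fun j => p (l + j)) 0 := by simpa using hl.symm
  have hlen : n ≤ l + (m - k) := hp.sub hln le_rfl (hq.1.shift k hkm)
    (by simpa using hl.symm) (by rw [← hqm]; congr 1; omega)
  have hp'0 : p' 0 = x := by rw [hp', cat_zero, hq0]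
  have hp'n : p' (k + (n - l)) = p n := by
    rw [hp', cat_add hglue]; congr 1; omega
  have hgeo' : Geo G C p' (k + (n - l)) := by
    refine ⟨(hq.1.take k hkm).cat (hp.1.shift l hln) hglue, fun m' r hr h0 h1 => ?_⟩
    have := hq.2 m' r hr (by rw [h0, hp'0, hq0]) (by rw [h1, hp'n, hqm])
    omega
  have hP' : seg p' 0 (k + (n - l)) = seg q 0 (k - 1) ∪ seg p l n := by
    ext y
    constructor
    · rintro ⟨i, _, hi, rfl⟩
      rcases lt_or_ge i k with h | h
      · left; exact ⟨i, by omega, by omega, by rw [hp', cat_le _ _ h.le]⟩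
      · obtain ⟨d, rfl⟩ := Nat.exists_eq_add_of_le h
        right; exact ⟨l + d, by omega, by omega, by rw [hp', cat_add hglue]⟩
    · rintro (⟨i, _, hi, rfl⟩ | ⟨i, h1, hi, rfl⟩)
      · exact ⟨i, by omega, by omega, by rw [hp', cat_le _ _ (by omega)]⟩
      · obtain ⟨d, rfl⟩ := Nat.exists_eq_add_of_le h1
        exact ⟨k + d, by omega, by omega, by rw [hp', cat_add hglue]⟩
  set U1 := seg q 0 (k - 1) with hU1
  set Yc := seg p l n with hYc
  have hxU1 : x ∈ U1 := ⟨0, le_rfl, by omega, hq0⟩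
  have hU1P : U1 ⊆ C \ seg p 0 n := by
    rintro y ⟨i, _, hi, rfl⟩; exact hqC i (by omega)
  have hYcP : Yc ⊆ seg p 0 n := by
    rintro y ⟨i, _, hi, rfl⟩; exact ⟨i, by omega, hi, rfl⟩
  have hPC : seg p 0 n ⊆ C := seg_sub hp.1 le_rfl
  refine ⟨_, p', hgeo', by rwa [hp'0], by rwa [hp'n], ?_⟩
  rw [hP']
  refine ⟨?_, fun hsub => ?_⟩
  swap
  · have : x ∈ Wset G C B (U1 ∪ Yc) := hsub ⟨hxC, hDB⟩
    exact this.1.2 (Or.inl hxU1)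
  rintro v1 ⟨⟨hv1C, hv1P⟩, z, hz, b, hb, hzb⟩
  set U : Set V := {y | ∃ i < l, p i = y} with hU
  have hUP : U ⊆ seg p 0 n := by
    rintro y ⟨i, hi, rfl⟩; exact ⟨i, by omega, by omega, rfl⟩
  have hPU : ∀ y ∈ seg p 0 n, y ∉ Yc → y ∈ U := by
    rintro y ⟨i, _, hi, rfl⟩ h
    by_contra hc
    apply h
    refine ⟨i, ?_, hi, rfl⟩
    by_contra h'
    exact hc ⟨i, by omega, rfl⟩
  set E := C \ (seg p 0 n ∪ U1) with hE
  have hE1 : (C \ (U1 ∪ Yc)) \ U ⊆ E := by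
    rintro y ⟨⟨h1, h2⟩, h3⟩
    refine ⟨h1, ?_⟩
    rintro (h | h)
    · exact h3 (hPU y h fun h' => h2 (Or.inr h'))
    · exact h2 (Or.inl h)
  have hE2 : E ⊆ C \ seg p 0 n := fun y hy => ⟨hy.1, fun h => hy.2 (Or.inl h)⟩
  have hE3 : (C \ seg p 0 n) \ U1 ⊆ E := by
    rintro y ⟨⟨h1, h2⟩, h3⟩
    exact ⟨h1, fun h => h.elim h2 h3⟩
  by_contra hcon
  set b' : Set V := B ∪ {y | y ∈ E ∧ ∃ z, RS G E y z ∧ ∃ b ∈ B, G.Adj z b} with hb'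
  have hUb : Tch G U b' := by
    rcases last_hit (U := U) hz with ⟨h1, h2⟩ | ⟨t, ht, rfl | ⟨t', ht', h1, h2⟩⟩
    · exfalso
      apply hcon
      have hv1 : v1 ∈ C \ seg p 0 n :=
        ⟨hv1C, fun h => h1 (hPU _ h fun h' => hv1P (Or.inr h'))⟩
      exact ⟨hv1, z, h2.mono' (hE1.trans hE2), b, hb, hzb⟩
    · exact ⟨t, ht, b, Or.inl hb, hzb⟩
    · exact ⟨t, ht, t', Or.inr ⟨hE1 ht', z, h2.mono' hE1, b, hb, hzb⟩, h1⟩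
  have hl0 : l ≠ 0 := by
    obtain ⟨t, ⟨i, hi, _⟩, _⟩ := hUb
    omega
  have hUseg : U = seg p 0 (l - 1) := by
    ext y
    constructor
    · rintro ⟨i, hi, rfl⟩; exact ⟨i, by omega, by omega, rfl⟩
    · rintro ⟨i, _, hi, rfl⟩; exact ⟨i, by omega, rfl⟩
  have cU : Cn G U := by
    rw [hUseg]; exact Cn_seg hp.1 (by omega) (by omega)
  have cU1 : Cn G U1 := Cn_seg hq.1 (by omega) (by omega)
  have cYc : Cn G Yc := Cn_seg hp.1 (by omega) (by omega)
  have cwA : Cn G ({w} ∪ A) := by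
    rcases hA with ⟨rfl, _⟩ | ⟨h1, _, h2⟩
    · simpa using Cn.singleton w
    · exact (Cn.singleton w).union h1 h2
  have cb' : Cn G b' := by
    obtain ⟨r, hr⟩ := hB.1
    refine Cn.of_root r (Or.inl hr) ?_
    rintro y (hy | ⟨hyE, z, hyz, b, hb, hzb⟩)
    · exact (hB.2 r hr y hy).mono' Set.subset_union_left
    · have h1 : RS G b' r b := (hB.2 r hr b hb).mono' Set.subset_union_left
      have h2 : z ∈ b' := Or.inr ⟨hyz.mem hyE, z, RS.refl' _, b, hb, hzb⟩
      have h3 : RS G b' z y := by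
        have hcm : cmp G E z ⊆ b' := fun t ht =>
          Or.inr ⟨RS.mem ht (hyz.mem hyE), z, RS.symm' ht, b, hb, hzb⟩
        exact (RS_in_cmp hyz.symm').mono' hcm
      exact (h1.tail' (Or.inl hb) h2 hzb.symm).trans' h3
  have hU1b : Tch G U1 b' := by
    obtain ⟨z0, hz0, b0, hb0, h0⟩ := hDB
    rcases last_hit (U := U1) hz0 with ⟨h1, h2⟩ | ⟨t, ht, rfl | ⟨t', ht', h1, h2⟩⟩
    · exact absurd hxU1 h1
    · exact ⟨t, ht, b0, Or.inl hb0, h0⟩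
    · exact ⟨t, ht, t', Or.inr ⟨hE3 ht', z0, h2.mono' hE3, b0, hb0, h0⟩, h1⟩
  have hUC : U ⊆ C := hUP.trans hPC
  have hU1C : U1 ⊆ C := fun y hy => (hU1P hy).1
  have hYC : Yc ⊆ C := hYcP.trans hPC
  have hwAC : Disjoint ({w} ∪ A) C := by
    rw [Set.disjoint_union_left]
    exact ⟨by simpa using hwC, hAC⟩
  have hdb' : ∀ S : Set V, S ⊆ C → Disjoint S E → Disjoint S b' := by
    intro S h1 h2
    rw [hb', Set.disjoint_union_right]
    exact ⟨(hBC.mono_right h1).symm, h2.mono_right fun y hy => hy.1⟩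
  have hdE : ∀ S : Set V, S ⊆ seg p 0 n ∪ U1 → Disjoint S E := by
    intro S h1
    rw [Set.disjoint_left]
    intro y hy hyE
    exact hyE.2 (h1 hy)
  refine k33 hG cU cU1 cwA (Cn.singleton u) cYc cb' ?_ ?_ ?_ ?_ ?_ ?_ ?_ ?_ ?_ ?_ ?_ ?_ ?_ ?_ ?_
    ?_ ?_ hUb ?_ ?_ hU1b ?_ ?_ ?_
  · exact Set.disjoint_left.2 fun y h1 h2 => (hU1P h2).2 (hUP h1)
  · exact (hwAC.mono_right hUC).symm
  · exact (hwAC.mono_right hU1C).symm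
  · simpa using fun h => huC (hYC h)
  · rw [Set.disjoint_singleton_left]
    rintro (h | ⟨h, _⟩)
    · exact huB h
    · exact huC h.1
  · exact hdb' _ hYC (hdE _ (hYcP.trans Set.subset_union_left))
  · simpa using fun h => huC (hUC h)
  · rw [Set.disjoint_left]
    rintro y ⟨i, hi, rfl⟩ ⟨j, hj, hj', h⟩
    have := hp.inj (by omega) (by omega) h
    omega
  · exact hdb' _ hUC (hdE _ (hUP.trans Set.subset_union_left))
  · simpa using fun h => huC (hU1C h)
  · exact Set.disjoint_left.2 fun y h1 h2 => (hU1P h1).2 (hYcP h2)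
  · exact hdb' _ hU1C (hdE _ Set.subset_union_right)
  · rw [Set.disjoint_singleton_right]
    rintro (h | h)
    · exact huw h
    · exact huA h
  · exact hwAC.mono_right hYC
  · rw [Set.disjoint_union_left]
    refine ⟨?_, ?_⟩
    · rw [Set.disjoint_singleton_left]
      rintro (h | ⟨h, _⟩)
      · exact hwB h
      · exact hwC h.1
    · rw [hb', Set.disjoint_union_right]
      exact ⟨hAB, hAC.mono_right fun y hy => hy.1.1⟩
  · exact ⟨p 0, ⟨0, by omega, rfl⟩, u, rfl, hu.symm⟩
  · refine ⟨p (l - 1), ⟨l - 1, by omega, rfl⟩, p l, ⟨l, le_rfl, hln, rfl⟩, ?_⟩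
    have := hp.1.2 (l - 1) (by omega)
    rwa [show l - 1 + 1 = l by omega] at this
  · exact ⟨x, hxU1, u, rfl, hux.symm⟩
  · refine ⟨q (k - 1), ⟨k - 1, by omega, by omega, rfl⟩, p l, ⟨l, le_rfl, hln, rfl⟩, ?_⟩
    have := hq.1.2 (k - 1) (by omega)
    rwa [show k - 1 + 1 = k by omega, ← hl] at this
  · rcases hA with ⟨_, h⟩ | ⟨_, ⟨u', rfl, y, hy, h⟩, _⟩
    · exact ⟨w, Or.inl rfl, u, rfl, h.symm⟩
    · exact ⟨y, Or.inr hy, u', rfl, h.symm⟩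
  · exact ⟨w, Or.inl rfl, p n, ⟨n, hln, le_rfl, rfl⟩, hw⟩
  · exact htw.mono Set.subset_union_left Set.subset_union_left

theorem key [Finite V] (hG : NoK G) {C A B : Set V} (hC : Cn G C) {u w : V} (huC : u ∉ C)
    (hwC : w ∉ C) (huw : u ≠ w) (hAC : Disjoint A C) (hBC : Disjoint B C) (hAB : Disjoint A B)
    (huA : u ∉ A) (hwA : w ∉ A) (huB : u ∉ B) (hwB : w ∉ B)
    (hA : (A = ∅ ∧ G.Adj u w) ∨ (Cn G A ∧ Tch G {u} A ∧ Tch G {w} A))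
    (hB : Tch G B C → Cn G B ∧ Tch G {u} B ∧ Tch G {w} B)
    (hu : Tch G {u} C) (hw : Tch G {w} C) :
    ∃ n p, Geo G C p n ∧ G.Adj u (p 0) ∧ G.Adj w (p n) ∧
      ∀ v ∈ C \ seg p 0 n, Tch G (cmp G (C \ seg p 0 n) v) B →
        ¬ Tch G (cmp G (C \ seg p 0 n) v) ({u, w} ∪ A) := by
  obtain ⟨u', rfl, a, ha, hua⟩ := hu
  obtain ⟨w', rfl, b, hb, hwb⟩ := hw
  obtain ⟨n0, p0, hp0, h0, h1⟩ := exists_Geo hC ha hb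
  have hex : ∃ N n p, Geo G C p n ∧ G.Adj u' (p 0) ∧ G.Adj w' (p n) ∧
      (Wset G C B (seg p 0 n)).ncard = N :=
    ⟨_, n0, p0, hp0, by rwa [h0], by rwa [h1], rfl⟩
  obtain ⟨n, p, hp, hu, hw, hN⟩ := Nat.find_spec hex
  have hmin : ∀ n' p', Geo G C p' n' → G.Adj u' (p' 0) → G.Adj w' (p' n') →
      ¬ Wset G C B (seg p' 0 n') ⊂ Wset G C B (seg p 0 n) := by
    intro n' p' h1 h2 h3 h4
    have h5 := Set.ncard_lt_ncard h4 (Set.toFinite _)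
    have h6 := Nat.find_min' hex ⟨n', p', h1, h2, h3, rfl⟩
    omega
  refine ⟨n, p, hp, hu, hw, fun v hv hDB hDA => ?_⟩
  have hDC : cmp G (C \ seg p 0 n) v ⊆ C := (cmp_subset hv).trans Set.sdiff_subset
  obtain ⟨cB, tu, tw⟩ := hB ((hDB.mono hDC le_rfl).symm)
  obtain ⟨x, hx, y, (rfl | rfl) | hy, hxy⟩ := hDA
  · obtain ⟨n', p', h1, h2, h3, h4⟩ := key_end hG hC huC hwC huw hAC hBC hAB huA hwA huB hwB hA cB
      tw hp hu hw hv hDB hx hxy.symm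
    exact hmin _ _ h1 h2 h3 h4
  · have hA' : (A = ∅ ∧ G.Adj y u') ∨ (Cn G A ∧ Tch G {y} A ∧ Tch G {u'} A) := by
      rcases hA with ⟨h, h'⟩ | ⟨h, h', h''⟩
      · exact Or.inl ⟨h, h'.symm⟩
      · exact Or.inr ⟨h, h'', h'⟩
    have hs := seg_rev p n
    obtain ⟨n', p', h1, h2, h3, h4⟩ := key_end hG hC hwC huC huw.symm hAC hBC hAB hwA huA hwB huB
      hA' cB tu hp.rev (by simpa using hw) (by simpa using hu) (v := v) (x := x)
      (by rwa [hs]) (by rwa [hs]) (by rwa [hs]) hxy.symm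
    rw [hs] at h4
    refine hmin n' _ h1.rev (by simpa using h3) (by simpa using h2) ?_
    rwa [seg_rev]
  · have hPC : seg p 0 n ⊆ C := seg_sub hp.1 le_rfl
    have hP0 : (seg p 0 n).Nonempty := ⟨p 0, 0, by omega, by omega, rfl⟩
    rcases hA with ⟨rfl, _⟩ | ⟨cA, tuA, twA⟩
    · exact hy
    have cP : Cn G (seg p 0 n) := Cn_seg hp.1 (by omega) le_rfl
    have huD : ∀ z : V, z ∉ C → Disjoint {z} (cmp G (C \ seg p 0 n) v) := by
      intro z hz
      simpa using fun h => hz (hDC h)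
    refine k33 hG (Cn.singleton u') (Cn.singleton w') Cn_cmp cA cB cP ?_ ?_ ?_ hAB ?_ ?_
      ?_ ?_ ?_ ?_ ?_ ?_ ?_ ?_ ?_ tuA tu ?_ twA tw ?_ ⟨x, hx, y, hy, hxy⟩ hDB
      (cmp_Tch hC hPC hP0 hv)
    · simpa using huw
    · exact huD _ huC
    · exact huD _ hwC
    · exact hAC.mono_right hPC
    · exact hBC.mono_right hPC
    · simpa using huA
    · simpa using huB
    · simpa using fun h => huC (hPC h)
    · simpa using hwA
    · simpa using hwB
    · simpa using fun h => hwC (hPC h)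
    · exact (hAC.mono_right hDC).symm
    · exact (hBC.mono_right hDC).symm
    · exact Set.disjoint_left.2 fun y h1 h2 => (cmp_subset hv h1).2 h2
    · exact ⟨u', rfl, p 0, ⟨0, by omega, by omega, rfl⟩, hu⟩
    · exact ⟨w', rfl, p n, ⟨n, by omega, by omega, rfl⟩, hw⟩

end PartB

section PartD
variable {V : Type} {G : SimpleGraph V}

/-- `z` is an earlier neighbour of `v` -/
def Ear (G : SimpleGraph V) (C : Set V) (rk : V → ℕ) (v z : V) : Prop :=
  G.Adj v z ∧ (z ∉ C ∨ rk z < rk v)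

/-- The colouring `col` can be extended to `C`. -/
def Psi (G : SimpleGraph V) (m : ℕ) (C : Set V) (col : V → Fin 3 × Fin m) : Prop :=
  ∃ (col' : V → Fin 3 × Fin m) (rk : V → ℕ), (∀ v, v ∉ C → col' v = col v) ∧ ∀ v ∈ C,
    (∀ z, Ear G C rk v z → col' z ≠ col' v) ∧
    (3 ≤ m → ∀ z z', Ear G C rk v z → Ear G C rk v z' → z ≠ z' → col' z ≠ col' z') ∧
    (∀ z ∈ C, G.Adj v z → rk z ≠ rk v)

theorem split [Finite V] {m : ℕ} {C P : Set V} (hPC : P ⊆ C) {col col1 : V → Fin 3 × Fin m}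
    {rkP : V → ℕ} (hcol : ∀ v, v ∉ P → col1 v = col v)
    (h1 : ∀ v ∈ P, ∀ z, G.Adj v z → (z ∉ C ∨ (z ∈ P ∧ rkP z < rkP v)) → col1 z ≠ col1 v)
    (h2 : 3 ≤ m → ∀ v ∈ P, ∀ z z', G.Adj v z → (z ∉ C ∨ (z ∈ P ∧ rkP z < rkP v)) →
      G.Adj v z' → (z' ∉ C ∨ (z' ∈ P ∧ rkP z' < rkP v)) → z ≠ z' → col1 z ≠ col1 z')
    (h3 : ∀ v ∈ P, ∀ z ∈ P, G.Adj v z → rkP z ≠ rkP v)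
    (hD : ∀ v ∈ C \ P, Psi G m (cmp G (C \ P) v) col1) : Psi G m C col := by
  have hch : ∀ D : Set V, ∃ (col' : V → Fin 3 × Fin m) (rk : V → ℕ), Psi G m D col1 →
      ((∀ v, v ∉ D → col' v = col1 v) ∧ ∀ v ∈ D,
    (∀ z, Ear G D rk v z → col' z ≠ col' v) ∧
    (3 ≤ m → ∀ z z', Ear G D rk v z → Ear G D rk v z' → z ≠ z' → col' z ≠ col' z') ∧
    (∀ z ∈ D, G.Adj v z → rk z ≠ rk v)) := by
    intro D
    by_cases h : Psi G m D col1
    · obtain ⟨c, r, h⟩ := h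
      exact ⟨c, r, fun _ => h⟩
    · exact ⟨col1, fun _ => 0, fun h' => absurd h' h⟩
  choose cf rf hf using hch
  obtain ⟨M, hM⟩ : ∃ M, ∀ v, rkP v < M := by
    obtain ⟨M, hM⟩ := (Set.finite_range rkP).bddAbove
    exact ⟨M + 1, fun v => Nat.lt_succ_of_le (hM ⟨v, rfl⟩)⟩
  set D : V → Set V := fun v => cmp G (C \ P) v with hDdef
  set col' : V → Fin 3 × Fin m :=
    fun v => if v ∈ P then col1 v else if v ∈ C then cf (D v) v else col1 v with hcol'
  set rk : V → ℕ := fun v => if v ∈ P then rkP v else M + rf (D v) v with hrk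
  have cP : ∀ v ∈ P, col' v = col1 v := fun v hv => by simp [hcol', hv]
  have cC : ∀ v, v ∉ C → col' v = col1 v := fun v hv => by simp [hcol', hv]
  have cD : ∀ v ∈ C \ P, col' v = cf (D v) v := fun v hv => by simp [hcol', hv.1, hv.2]
  have rP : ∀ v ∈ P, rk v = rkP v := fun v hv => by simp [hrk, hv]
  have rD : ∀ v, v ∉ P → rk v = M + rf (D v) v := fun v hv => by simp [hrk, hv]
  have eP : ∀ v ∈ P, ∀ z, Ear G C rk v z → G.Adj v z ∧ (z ∉ C ∨ (z ∈ P ∧ rkP z < rkP v)) ∧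
      col' z = col1 z := by
    rintro v hv z ⟨ha, h | h⟩
    · exact ⟨ha, Or.inl h, cC z h⟩
    · by_cases hz : z ∈ P
      · rw [rP z hz, rP v hv] at h
        exact ⟨ha, Or.inr ⟨hz, h⟩, cP z hz⟩
      · rw [rD z hz, rP v hv] at h
        have := hM v
        omega
  have nD : ∀ v ∈ C \ P, ∀ z ∈ C \ P, G.Adj v z → D z = D v := by
    intro v hv z hz h
    exact cmp_eq (RS.edge hv hz h)
  have eD : ∀ v ∈ C \ P, ∀ z, Ear G C rk v z → Ear G (D v) (rf (D v)) v z ∧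
      col' z = cf (D v) z := by
    rintro v hv z ⟨ha, h⟩
    have hfv := hf (D v) (hD v hv)
    have hsub : D v ⊆ C \ P := cmp_subset hv
    by_cases hz : z ∈ C \ P
    · have hDz := nD v hv z hz ha
      refine ⟨⟨ha, Or.inr ?_⟩, by rw [cD z hz, hDz]⟩
      have h := h.resolve_left (not_not.2 hz.1)
      rw [rD z hz.2, rD v hv.2, hDz] at h
      omega
    · have hzD : z ∉ D v := fun h => hz (hsub h)
      refine ⟨⟨ha, Or.inl hzD⟩, ?_⟩
      rw [hfv.1 z hzD]
      by_cases hzP : z ∈ P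
      · exact cP z hzP
      · exact cC z fun h => hz ⟨h, hzP⟩
  refine ⟨col', rk, fun v hv => ?_, fun v hv => ?_⟩
  · rw [cC v hv, hcol v fun h => hv (hPC h)]
  by_cases hvP : v ∈ P
  · refine ⟨fun z hz => ?_, fun hm z z' hz hz' hne => ?_, fun z hz ha => ?_⟩
    · obtain ⟨ha, hb, hc⟩ := eP v hvP z hz
      rw [hc, cP v hvP]
      exact h1 v hvP z ha hb
    · obtain ⟨ha, hb, hc⟩ := eP v hvP z hz
      obtain ⟨ha', hb', hc'⟩ := eP v hvP z' hz'
      rw [hc, hc']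
      exact h2 hm v hvP z z' ha hb ha' hb' hne
    · by_cases hzP : z ∈ P
      · rw [rP z hzP, rP v hvP]; exact h3 v hvP z hzP ha
      · rw [rD z hzP, rP v hvP]
        have := hM v
        omega
  · have hv' : v ∈ C \ P := ⟨hv, hvP⟩
    have hfv := (hf (D v) (hD v hv')).2 v mem_cmp_self
    refine ⟨fun z hz => ?_, fun hm z z' hz hz' hne => ?_, fun z hz ha => ?_⟩
    · obtain ⟨ha, hc⟩ := eD v hv' z hz
      rw [hc, cD v hv']
      exact hfv.1 z ha
    · obtain ⟨ha, hc⟩ := eD v hv' z hz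
      obtain ⟨ha', hc'⟩ := eD v hv' z' hz'
      rw [hc, hc']
      exact hfv.2.1 hm z z' ha ha' hne
    · by_cases hzP : z ∈ P
      · rw [rP z hzP, rD v hvP]
        have := hM z
        omega
      · have hDz := nD v hv' z ⟨hz, hzP⟩ ha
        rw [rD z hzP, rD v hvP, hDz]
        have := hfv.2.2 z (by rw [← hDz]; exact mem_cmp_self) ha
        omega

/-- bags -/
abbrev Pm (m : ℕ) := Fin 3 × Fin m ≃ Fin 3 × Fin m

theorem step [Finite V] {m : ℕ} (hm : 2 ≤ m) {C : Set V} {p : ℕ → V} {n : ℕ}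
    (hp : Geo G C p n) (e : Pm m) {col : V → Fin 3 × Fin m}
    (hbag : ∀ v ∈ C, ∀ z, z ∉ C → G.Adj v z → ∃ j, col z = e (0, j) ∨ col z = e (1, j))
    (hrb : 3 ≤ m → ∀ v ∈ C, ∀ z z', z ∉ C → z' ∉ C → G.Adj v z → G.Adj v z' → z ≠ z' →
      col z ≠ col z')
    (hD : ∀ col1 : V → Fin 3 × Fin m, (∀ v, v ∉ seg p 0 n → col1 v = col v) →
      (∀ z ∈ seg p 0 n, ∃ j, col1 z = e (2, j)) → ∀ v ∈ C \ seg p 0 n,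
      (3 ≤ m → ∀ y ∈ cmp G (C \ seg p 0 n) v, ∀ z z', z ∉ cmp G (C \ seg p 0 n) v →
        z' ∉ cmp G (C \ seg p 0 n) v → G.Adj y z → G.Adj y z' → z ≠ z' → col1 z ≠ col1 z') →
      Psi G m (cmp G (C \ seg p 0 n) v) col1) :
    Psi G m C col := by
  have hm0 : 0 < m := by omega
  have hPC : seg p 0 n ⊆ C := seg_sub hp.1 le_rfl
  set ix : V → ℕ := fun v => if h : ∃ i, i ≤ n ∧ p i = v then h.choose else 0 with hix
  have hixp : ∀ i ≤ n, ix (p i) = i := by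
    intro i hi
    have h : ∃ j, j ≤ n ∧ p j = p i := ⟨i, hi, rfl⟩
    have h' : ix (p i) = h.choose := by simp only [hix]; rw [dif_pos h]
    rw [h']
    exact hp.inj h.choose_spec.1 hi h.choose_spec.2
  set col1 : V → Fin 3 × Fin m := fun v =>
    if v ∈ seg p 0 n then e (2, ⟨ix v % m, Nat.mod_lt _ hm0⟩) else col v with hcol1
  have c1 : ∀ v, v ∉ seg p 0 n → col1 v = col v := fun v hv => by simp [hcol1, hv]
  have c2 : ∀ i ≤ n, col1 (p i) = e (2, ⟨i % m, Nat.mod_lt _ hm0⟩) := fun i hi => by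
    have : p i ∈ seg p 0 n := ⟨i, by omega, hi, rfl⟩
    simp [hcol1, this, hixp i hi]
  have c3 : ∀ z ∈ seg p 0 n, ∃ j, col1 z = e (2, j) := by
    rintro z ⟨i, _, hi, rfl⟩
    exact ⟨_, c2 i hi⟩
  have cne : ∀ v ∈ C, ∀ z, z ∉ C → G.Adj v z → ∀ y ∈ seg p 0 n, col1 z ≠ col1 y := by
    intro v hv z hz ha y hy
    obtain ⟨j, hj⟩ := c3 y hy
    rw [c1 z fun h => hz (hPC h), hj]
    obtain ⟨i, h | h⟩ := hbag v hv z hz ha <;> rw [h] <;> simp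
  have cpp : ∀ i j, i < j → j ≤ n → j ≤ i + 2 → (2 < m ∨ j = i + 1) →
      col1 (p i) ≠ col1 (p j) := by
    intro i j hij hj h1 h2 h
    rw [c2 i (by omega), c2 j hj] at h
    have h := e.injective h
    simp only [Prod.mk.injEq, Fin.mk.injEq, true_and] at h
    have h3 : (i : ℕ) ≡ j [MOD m] := h
    rw [Nat.modEq_iff_dvd' (by omega)] at h3
    have := Nat.le_of_dvd (by omega) h3
    omega
  refine split (P := seg p 0 n) hPC (rkP := ix) (col1 := col1) c1 ?_ ?_ ?_ ?_
  · rintro v ⟨i, _, hi, rfl⟩ z ha (hz | ⟨⟨j, _, hj, rfl⟩, hlt⟩)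
    · exact cne _ (hp.1.1 i hi) z hz ha _ ⟨i, by omega, hi, rfl⟩
    · rw [hixp i hi, hixp j hj] at hlt
      have := hp.adj hlt.le hi ha.symm
      exact cpp j i hlt hi (by omega) (by omega)
  · rintro hm3 v ⟨i, _, hi, rfl⟩ z z' ha hz ha' hz' hne
    rcases hz with hz | ⟨⟨j, _, hj, rfl⟩, hlt⟩
    · rcases hz' with hz' | ⟨hz', hlt'⟩
      · rw [c1 z fun h => hz (hPC h), c1 z' fun h => hz' (hPC h)]
        exact hrb hm3 _ (hp.1.1 i hi) z z' hz hz' ha ha' hne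
      · exact cne _ (hp.1.1 i hi) z hz ha _ hz'
    · rcases hz' with hz' | ⟨⟨j', _, hj', rfl⟩, hlt'⟩
      · exact (cne _ (hp.1.1 i hi) z' hz' ha' _ ⟨j, by omega, hj, rfl⟩).symm
      · rw [hixp i hi, hixp _ hj] at hlt
        rw [hixp i hi, hixp _ hj'] at hlt'
        have h1 := hp.adj hlt.le hi ha.symm
        have h2 := hp.adj hlt'.le hi ha'.symm
        exact absurd (by congr 1; omega) hne
  · rintro v ⟨i, _, hi, rfl⟩ z ⟨j, _, hj, rfl⟩ ha h
    rw [hixp i hi, hixp j hj] at h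
    subst h
    exact ha.ne rfl
  · intro v hv
    refine hD col1 c1 c3 v hv ?_
    intro hm3 y hy z z' hz hz' ha ha' hne
    have hyC := cmp_subset hv hy
    have hout : ∀ z, z ∉ cmp G (C \ seg p 0 n) v → G.Adj y z → z ∉ C ∨ z ∈ seg p 0 n := by
      intro z hz ha
      by_contra h
      push Not at h
      exact hz (RS.tail' hy hyC h ha)
    rcases hout z hz ha with hz | ⟨j, _, hj, rfl⟩
    · rcases hout z' hz' ha' with hz' | hz'
      · rw [c1 z fun h => hz (hPC h), c1 z' fun h => hz' (hPC h)]
        exact hrb hm3 _ hyC.1 z z' hz hz' ha ha' hne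
      · exact cne _ hyC.1 z hz ha _ hz'
    · rcases hout z' hz' ha' with hz' | ⟨j', _, hj', rfl⟩
      · exact (cne _ hyC.1 z' hz' ha' _ ⟨j, by omega, hj, rfl⟩).symm
      · rcases lt_trichotomy j j' with h | h | h
        · exact cpp j j' h hj' (hp.near h.le hj' hyC.1 ha ha') (by omega)
        · exact absurd (by rw [h]) hne
        · exact (cpp j' j h hj (hp.near h.le hj hyC.1 ha' ha) (by omega)).symm

end PartD

section PartD2
variable {V : Type} {G : SimpleGraph V}

/-- The state of the colouring procedure. -/
structure St (G : SimpleGraph V) (m : ℕ) (C : Set V) (α β : List V) (e : Pm m)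
    (col : V → Fin 3 × Fin m) : Prop where
  cn : Cn G C
  ch1 : (α ++ β).IsChain G.Adj
  ch2 : (β ++ α).IsChain G.Adj
  nd : (α ++ β).Nodup
  dj : ∀ x, (x ∈ α ∨ x ∈ β) → x ∉ C
  nb : ∀ v ∈ C, ∀ z, z ∉ C → G.Adj v z → z ∈ α ∨ z ∈ β
  ca : ∀ z ∈ α, ∀ v ∈ C, G.Adj v z → ∃ j, col z = e (0, j)
  cb : ∀ z ∈ β, ∀ v ∈ C, G.Adj v z → ∃ j, col z = e (1, j)
  rb : 3 ≤ m → ∀ v ∈ C, ∀ z z', z ∉ C → z' ∉ C → G.Adj v z → G.Adj v z' → z ≠ z' →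
      col z ≠ col z'

/-- permuting bags -/
def pe {m : ℕ} (e : Pm m) (σ : Fin 3 ≃ Fin 3) : Pm m :=
  (Equiv.prodCongr σ (Equiv.refl _)).trans e

theorem pe_apply {m : ℕ} (e : Pm m) (σ : Fin 3 ≃ Fin 3) (i : Fin 3) (j : Fin m) :
    pe e σ (i, j) = e (σ i, j) := rfl

theorem St.swap {m : ℕ} {C : Set V} {α β : List V} {e : Pm m} {col : V → Fin 3 × Fin m}
    (h : St G m C α β e col) : St G m C β α (pe e (Equiv.swap 0 1)) col where
  cn := h.cn
  ch1 := h.ch2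
  ch2 := h.ch1
  nd := List.nodup_append_comm.1 h.nd
  dj := fun x hx => h.dj x hx.symm
  nb := fun v hv z hz ha => (h.nb v hv z hz ha).symm
  ca := fun z hz v hv ha => by
    obtain ⟨j, hj⟩ := h.cb z hz v hv ha
    exact ⟨j, by rw [pe_apply, hj, Equiv.swap_apply_left]⟩
  cb := fun z hz v hv ha => by
    obtain ⟨j, hj⟩ := h.ca z hz v hv ha
    exact ⟨j, by rw [pe_apply, hj, Equiv.swap_apply_right]⟩
  rb := h.rb

theorem St.bag {m : ℕ} {C : Set V} {α β : List V} {e : Pm m} {col : V → Fin 3 × Fin m}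
    (h : St G m C α β e col) : ∀ v ∈ C, ∀ z, z ∉ C → G.Adj v z →
      ∃ j, col z = e (0, j) ∨ col z = e (1, j) := by
  intro v hv z hz ha
  rcases h.nb v hv z hz ha with h' | h'
  · obtain ⟨j, hj⟩ := h.ca z h' v hv ha
    exact ⟨j, Or.inl hj⟩
  · obtain ⟨j, hj⟩ := h.cb z h' v hv ha
    exact ⟨j, Or.inr hj⟩

theorem chain_mid {u w : V} {l : List V} (h : (u :: (l ++ [w])).IsChain G.Adj) (hl : l ≠ []) :
    Cn G {x | x ∈ l} ∧ Tch G {u} {x | x ∈ l} ∧ Tch G {w} {x | x ∈ l} := by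
  rw [List.isChain_cons] at h
  obtain ⟨h1, h2⟩ := h
  rw [List.isChain_append] at h2
  obtain ⟨h2, _, h3⟩ := h2
  refine ⟨Cn_chain l hl h2, ⟨u, rfl, l.head hl, List.head_mem hl, ?_⟩,
    ⟨w, rfl, l.getLast hl, List.getLast_mem hl, ?_⟩⟩
  · apply h1
    cases l with
    | nil => exact absurd rfl hl
    | cons a l => simp
  · exact (h3 _ (by simp [List.getLast?_eq_getLast_of_ne_nil hl]) w (by simp)).symm

theorem first_att (Q : V → Prop) (l : List V) (h : ∃ x ∈ l, Q x) :
    ∃ l1 u l2, l = l1 ++ u :: l2 ∧ Q u ∧ ∀ x ∈ l1, ¬ Q x := by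
  induction l with
  | nil => simp at h
  | cons a l ih =>
    by_cases ha : Q a
    · exact ⟨[], a, l, rfl, ha, by simp⟩
    · obtain ⟨l1, u, l2, rfl, h2, h3⟩ := ih (by
        obtain ⟨x, hx, hQ⟩ := h
        rcases List.mem_cons.1 hx with rfl | hx
        · exact absurd hQ ha
        · exact ⟨x, hx, hQ⟩)
      refine ⟨a :: l1, u, l2, rfl, h2, ?_⟩
      intro x hx
      rcases List.mem_cons.1 hx with rfl | hx
      · exact ha
      · exact h3 x hx

theorem last_att (Q : V → Prop) (l : List V) (h : ∃ x ∈ l, Q x) :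
    ∃ l1 u l2, l = l1 ++ u :: l2 ∧ Q u ∧ ∀ x ∈ l2, ¬ Q x := by
  obtain ⟨l1, u, l2, h1, h2, h3⟩ := first_att Q l.reverse (by simpa using h)
  refine ⟨l2.reverse, u, l1.reverse, ?_, h2, by simpa using h3⟩
  have := congrArg List.reverse h1
  simpa using this

theorem two_att (Q : V → Prop) (l : List V) {x y : V} (hx : x ∈ l) (hy : y ∈ l) (hxy : x ≠ y)
    (hQx : Q x) (hQy : Q y) :
    ∃ l1 u l0 w l2, l = l1 ++ u :: (l0 ++ w :: l2) ∧ Q u ∧ Q w ∧ (∀ x ∈ l1, ¬ Q x) ∧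
      ∀ x ∈ l2, ¬ Q x := by
  obtain ⟨l1, u, r, rfl, hu, h1⟩ := first_att Q l ⟨x, hx, hQx⟩
  have : ∃ z ∈ r, Q z := by
    by_contra hc
    push Not at hc
    have hall : ∀ z ∈ l1 ++ u :: r, Q z → z = u := by
      intro z hz hQ
      rcases List.mem_append.1 hz with h | h
      · exact absurd hQ (h1 z h)
      · rcases List.mem_cons.1 h with h | h
        · exact h
        · exact absurd hQ (hc z h)
    exact hxy ((hall x hx hQx).trans (hall y hy hQy).symm)
  obtain ⟨l0, w, l2, rfl, hw, h2⟩ := last_att Q r this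
  exact ⟨l1, u, l0, w, l2, rfl, hu, hw, h1, h2⟩

/-- list of a walk -/
def pl (p : ℕ → V) (n : ℕ) : List V := (List.range (n + 1)).map p

theorem mem_pl {p : ℕ → V} {n : ℕ} {x : V} : x ∈ pl p n ↔ x ∈ seg p 0 n := by
  simp only [pl, List.mem_map, List.mem_range, seg, Set.mem_ofPred_eq]
  exact ⟨fun ⟨i, h, h'⟩ => ⟨i, by omega, by omega, h'⟩, fun ⟨i, _, h, h'⟩ => ⟨i, by omega, h'⟩⟩

theorem pl_chain {C : Set V} {p : ℕ → V} {n : ℕ} (hp : Wk G C p n) : (pl p n).IsChain G.Adj := by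
  rw [pl, List.isChain_map]
  exact (List.isChain_range_succ _ n).2 fun m hm => hp.2 m hm

theorem pl_nodup {C : Set V} {p : ℕ → V} {n : ℕ} (hp : Geo G C p n) : (pl p n).Nodup := by
  refine List.Nodup.map_on ?_ List.nodup_range
  intro i hi j hj h
  rw [List.mem_range] at hi hj
  exact hp.inj (by omega) (by omega) h

theorem pl_head (p : ℕ → V) (n : ℕ) : (pl p n).head? = some (p 0) := by
  simp [pl, List.range_succ_eq_map]

theorem pl_last (p : ℕ → V) (n : ℕ) : (pl p n).getLast? = some (p n) := by
  simp [pl, List.range_succ]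

theorem pl_rev_chain {C : Set V} {p : ℕ → V} {n : ℕ} (hp : Wk G C p n) :
    (pl p n).reverse.IsChain G.Adj := by
  rw [List.isChain_reverse]
  exact (pl_chain hp).imp fun a b h => h.symm

/-- Neighbours of a component. -/
theorem cmp_out {C P : Set V} {v y z : V} (hv : v ∈ C \ P) (hy : y ∈ cmp G (C \ P) v)
    (hz : z ∉ cmp G (C \ P) v) (ha : G.Adj y z) : z ∉ C ∨ z ∈ P := by
  by_contra h
  push Not at h
  exact hz (RS.tail' hy (cmp_subset hv hy) h ha)

end PartD2

section PartD3
variable {V : Type} {G : SimpleGraph V}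

theorem exists_sigma (i : Fin 3) (hi : i ≠ 2) : ∃ σ : Fin 3 ≃ Fin 3, σ 0 = i ∧ σ 1 = 2 := by
  fin_cases i
  · exact ⟨Equiv.swap 1 2, by decide, by decide⟩
  · exact ⟨finRotate 3, by decide, by decide⟩
  · exact absurd rfl hi

theorem mkSt {m : ℕ} {C : Set V} {p : ℕ → V} {n : ℕ} (hp : Geo G C p n) (e : Pm m)
    {col col1 : V → Fin 3 × Fin m} {v : V} (hv : v ∈ C \ seg p 0 n)
    (hc1 : ∀ v, v ∉ seg p 0 n → col1 v = col v)
    (hc2 : ∀ z ∈ seg p 0 n, ∃ j, col1 z = e (2, j))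
    (hrb : 3 ≤ m → ∀ y ∈ cmp G (C \ seg p 0 n) v, ∀ z z', z ∉ cmp G (C \ seg p 0 n) v →
        z' ∉ cmp G (C \ seg p 0 n) v → G.Adj y z → G.Adj y z' → z ≠ z' → col1 z ≠ col1 z')
    (L Pl : List V) (hPl : ∀ x, x ∈ Pl ↔ x ∈ seg p 0 n) (hch1 : (L ++ Pl).IsChain G.Adj)
    (hch2 : (Pl ++ L).IsChain G.Adj) (hndL : L.Nodup) (hndP : Pl.Nodup)
    (hLC : ∀ x ∈ L, x ∉ C) (i : Fin 3) (hi : i ≠ 2)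
    (hz : ∀ y ∈ cmp G (C \ seg p 0 n) v, ∀ z, z ∉ C → G.Adj y z → z ∈ L ∧ ∃ j, col z = e (i, j)) :
    ∃ e', St G m (cmp G (C \ seg p 0 n) v) L Pl e' col1 := by
  obtain ⟨σ, h0, h1⟩ := exists_sigma i hi
  have hPC : seg p 0 n ⊆ C := seg_sub hp.1 le_rfl
  refine ⟨pe e σ, Cn_cmp, hch1, hch2, ?_, ?_, ?_, ?_, ?_, hrb⟩
  · refine List.Nodup.append hndL hndP ?_
    intro x hx hx'
    exact hLC x hx (hPC ((hPl x).1 hx'))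
  · rintro x (hx | hx) hxD
    · exact hLC x hx (cmp_subset hv hxD).1
    · exact (cmp_subset hv hxD).2 ((hPl x).1 hx)
  · intro y hy z hzD ha
    rcases cmp_out hv hy hzD ha with h | h
    · exact Or.inl (hz y hy z h ha).1
    · exact Or.inr ((hPl z).2 h)
  · intro z hzL y hy ha
    obtain ⟨_, j, hj⟩ := hz y hy z (hLC z hzL) ha
    exact ⟨j, by rw [hc1 z fun h => hLC z hzL (hPC h), hj, pe_apply, h0]⟩
  · intro z hzP y hy ha
    obtain ⟨j, hj⟩ := hc2 z ((hPl z).1 hzP)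
    exact ⟨j, by rw [hj, pe_apply, h1]⟩

theorem cmp_ssub {C P : Set V} (hPC : P ⊆ C) (hP : P.Nonempty) {v : V} (hv : v ∈ C \ P) :
    cmp G (C \ P) v ⊂ C := by
  refine ⟨(cmp_subset hv).trans Set.sdiff_subset, fun h => ?_⟩
  obtain ⟨x, hx⟩ := hP
  exact (cmp_subset hv (h (hPC hx))).2 hx

theorem chain_part {R : V → V → Prop} {l b : List V} (h : l.IsChain R)
    (hs : ∃ s t, s ++ b ++ t = l) : b.IsChain R := by
  obtain ⟨s, t, rfl⟩ := hs
  exact h.left_of_append.right_of_append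

theorem nd_rot {l1 l0 l2 β : List V} {u w : V}
    (h : (l1 ++ u :: (l0 ++ w :: l2) ++ β).Nodup) :
    (w :: (l2 ++ β ++ l1 ++ [u])).Nodup ∧ (u :: (l0 ++ [w])).Nodup := by
  simp only [List.nodup_append, List.nodup_cons, List.mem_append, List.mem_cons,
    List.not_mem_nil] at h ⊢
  constructor <;> grind

set_option maxHeartbeats 1000000 in
theorem caseMain [Finite V] (hG : NoK G) {m : ℕ} (hm : 2 ≤ m) {C : Set V} {α β : List V}
    {e : Pm m} {col : V → Fin 3 × Fin m} (h : St G m C α β e col)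
    (ih : ∀ D, D ⊂ C → ∀ α β e col, St G m D α β e col → Psi G m D col)
    {x y : V} (hx : x ∈ α) (hy : y ∈ α) (hxy : x ≠ y) (hax : ∃ v ∈ C, G.Adj v x)
    (hay : ∃ v ∈ C, G.Adj v y) : Psi G m C col := by
  obtain ⟨l1, u, l0, w, l2, rfl, hu, hw, h1, h2⟩ :=
    two_att (fun z => ∃ v ∈ C, G.Adj v z) α hx hy hxy hax hay
  have hnd := h.nd
  have hchA : (u :: (l0 ++ [w])).IsChain G.Adj := by
    refine chain_part h.ch1 ⟨l1, l2 ++ β, ?_⟩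
    simp
  have hchB : β ≠ [] → (w :: (l2 ++ β ++ l1 ++ [u])).IsChain G.Adj := by
    intro hβ
    have k1 : ((w :: l2) ++ β).IsChain G.Adj := h.ch1.suffix ⟨l1 ++ u :: l0, by simp⟩
    have k2 : (β ++ (l1 ++ [u])).IsChain G.Adj := chain_part h.ch2 ⟨[], l0 ++ w :: l2, by simp⟩
    have := k1.append_overlap k2 hβ
    simpa using this
  have hdj := h.dj
  have huC : u ∉ C := hdj u (by simp)
  have hwC : w ∉ C := hdj w (by simp)
  simp only [List.nodup_append, List.nodup_cons, List.mem_append, List.mem_cons] at hnd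
  have huw : u ≠ w := by grind
  have hβB : ∀ S ⊆ C, Tch G {z | z ∈ l2 ++ β ++ l1} S → β ≠ [] := by
    rintro S hS ⟨z, hz, v, hv, ha⟩ rfl
    have hz : z ∈ l2 ++ [] ++ l1 := hz
    simp only [List.append_nil, List.mem_append] at hz
    rcases hz with hz | hz
    · exact h2 z hz ⟨v, hS hv, ha.symm⟩
    · exact h1 z hz ⟨v, hS hv, ha.symm⟩
  obtain ⟨n, p, hp, hup, hwp, hkey⟩ := key (A := {z | z ∈ l0}) (B := {z | z ∈ l2 ++ β ++ l1})
    hG h.cn huC hwC huw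
    (Set.disjoint_left.2 fun z hz => hdj z (by
      have hz : z ∈ l0 := hz
      simp [hz]))
    (Set.disjoint_left.2 fun z hz => hdj z (by
      have hz : z ∈ l2 ++ β ++ l1 := hz
      simp only [List.mem_append] at hz
      simp only [List.mem_append, List.mem_cons]
      tauto))
    (Set.disjoint_left.2 fun z hz hz' => by
      have hz : z ∈ l0 := hz
      have hz' : z ∈ l2 ++ β ++ l1 := hz'
      simp only [List.mem_append] at hz'
      grind)
    (fun hz => by
      have hz : u ∈ l0 := hz
      grind)
    (fun hz => by
      have hz : w ∈ l0 := hz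
      grind)
    (fun hz => by
      have hz : u ∈ l2 ++ β ++ l1 := hz
      simp only [List.mem_append] at hz
      grind)
    (fun hz => by
      have hz : w ∈ l2 ++ β ++ l1 := hz
      simp only [List.mem_append] at hz
      grind)
    (by
      by_cases hl : l0 = []
      · subst hl
        left
        refine ⟨by simp, ?_⟩
        simpa using hchA
      · right
        exact chain_mid hchA hl)
    (by
      intro ht
      have hβ := hβB C le_rfl ht
      have := chain_mid (hchB hβ) (by simp [hβ])
      exact ⟨this.1, this.2.2, this.2.1⟩)
    (by obtain ⟨v, hv, ha⟩ := hu; exact ⟨u, rfl, v, hv, ha.symm⟩)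
    (by obtain ⟨v, hv, ha⟩ := hw; exact ⟨w, rfl, v, hv, ha.symm⟩)
  have hPC : seg p 0 n ⊆ C := seg_sub hp.1 le_rfl
  have hP0 : (seg p 0 n).Nonempty := ⟨p 0, 0, by omega, by omega, rfl⟩
  refine step hm hp e h.bag h.rb ?_
  intro col1 hc1 hc2 v hv hrb
  have hss := cmp_ssub (G := G) hPC hP0 hv
  have hDC := hss.1
  by_cases hDB : Tch G (cmp G (C \ seg p 0 n) v) {z | z ∈ l2 ++ β ++ l1}
  · have hno := hkey v hv hDB
    have hβ := hβB _ hDC hDB.symm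
    obtain ⟨e', he'⟩ := mkSt hp e hv hc1 hc2 hrb (w :: (l2 ++ β ++ l1 ++ [u])) (pl p n)
      (fun x => mem_pl) (by
        refine (hchB hβ).append (pl_chain hp.1) ?_
        rw [pl_head, ← List.cons_append, List.getLast?_concat]
        simpa using hup) (by
        refine (pl_chain hp.1).append (hchB hβ) ?_
        rw [pl_last]
        simpa using hwp.symm) (nd_rot h.nd).1 (pl_nodup hp) (by
        intro z hz
        simp only [List.mem_append, List.mem_cons, List.not_mem_nil, or_false] at hz
        apply hdj
        simp only [List.mem_append, List.mem_cons]
        tauto) 1 (by decide) (by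
        intro y hy z hzC ha
        have hzn : ¬ (z = u ∨ z = w ∨ z ∈ l0) := by
          intro hz
          refine hno ⟨y, hy, z, ?_, ha⟩
          rcases hz with hz | hz | hz
          · exact Or.inl (Or.inl hz)
          · exact Or.inl (Or.inr hz)
          · exact Or.inr hz
        have hzβ : z ∈ β := by
          have h3 := h.nb y (hDC hy) z hzC ha
          have h4 : z ∉ l1 := fun hz => h1 z hz ⟨y, hDC hy, ha⟩
          have h5 : z ∉ l2 := fun hz => h2 z hz ⟨y, hDC hy, ha⟩
          simp only [List.mem_append, List.mem_cons] at h3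
          tauto
        exact ⟨by simp [hzβ], h.cb z hzβ y (hDC hy) ha⟩)
    exact ih _ hss _ _ _ _ he'
  · obtain ⟨e', he'⟩ := mkSt hp e hv hc1 hc2 hrb (u :: (l0 ++ [w])) (pl p n).reverse
      (fun x => by rw [List.mem_reverse, mem_pl]) (by
        refine hchA.append (pl_rev_chain hp.1) ?_
        rw [List.head?_reverse, pl_last, ← List.cons_append, List.getLast?_concat]
        simpa using hwp) (by
        refine (pl_rev_chain hp.1).append hchA ?_
        rw [List.getLast?_reverse, pl_head]
        simpa using hup.symm) (nd_rot h.nd).2 (List.nodup_reverse.2 (pl_nodup hp)) (by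
        intro z hz
        simp only [List.mem_append, List.mem_cons, List.not_mem_nil, or_false] at hz
        apply hdj
        simp only [List.mem_append, List.mem_cons]
        tauto) 0 (by decide) (by
        intro y hy z hzC ha
        have hzn : ¬ (z ∈ l2 ++ β ++ l1) := fun hz => hDB ⟨y, hy, z, hz, ha⟩
        have h3 := h.nb y (hDC hy) z hzC ha
        simp only [List.mem_append, List.mem_cons] at h3 hzn
        have h4 : z = u ∨ z ∈ l0 ∨ z = w := by tauto
        refine ⟨by simpa using h4, h.ca z ?_ y (hDC hy) ha⟩
        simp only [List.mem_append, List.mem_cons]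
        tauto)
    exact ih _ hss _ _ _ _ he'

theorem caseSmall [Finite V] {m : ℕ} (hm : 2 ≤ m) {C : Set V} {a : List V}
    {e : Pm m} {col : V → Fin 3 × Fin m} (h : St G m C a [] e col) {x : V} (hx : x ∈ C)
    (hc1 : (a ++ [x]).IsChain G.Adj) (hc2 : ([x] ++ a).IsChain G.Adj)
    (ih : ∀ D, D ⊂ C → ∀ α β e col, St G m D α β e col → Psi G m D col) : Psi G m C col := by
  have hp : Geo G C (fun _ => x) 0 :=
    ⟨⟨fun _ _ => hx, fun i hi => by omega⟩, fun m q _ _ _ => by omega⟩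
  have hs : ∀ y, y ∈ [x] ↔ y ∈ seg (fun _ : ℕ => x) 0 0 := by
    intro y
    constructor
    · intro hy
      exact ⟨0, le_rfl, le_rfl, by simpa using (List.mem_singleton.1 hy).symm⟩
    · rintro ⟨_, _, _, rfl⟩
      simp
  refine step hm hp e h.bag h.rb ?_
  intro col1 hcol1 hcol2 v hv hrb
  have hPC := seg_sub hp.1 le_rfl (a := 0)
  have hss := cmp_ssub (G := G) hPC ⟨x, (hs x).1 (by simp)⟩ hv
  obtain ⟨e', he'⟩ := mkSt hp e hv hcol1 hcol2 hrb a [x] hs hc1 hc2 (by simpa using h.nd)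
    (by simp) (fun y hy => h.dj y (Or.inl hy)) 0 (by decide) (by
      intro y hy z hz ha
      have h1 := h.nb y (hss.1 hy) z hz ha
      simp only [List.not_mem_nil, or_false] at h1
      exact ⟨h1, h.ca z h1 y (hss.1 hy) ha⟩)
  exact ih _ hss _ _ _ _ he'

theorem exists_two {K : Type} {s t x y : K} (hst : s ≠ t) (hxy : x ≠ y) :
    ∃ e : K ≃ K, e s = x ∧ e t = y := by
  refine ⟨(Equiv.swap s x).trans (Equiv.swap (Equiv.swap s x t) y), ?_, ?_⟩
  · rw [Equiv.trans_apply, Equiv.swap_apply_left]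
    refine Equiv.swap_apply_of_ne_of_ne ?_ hxy
    intro h
    apply hst
    apply (Equiv.swap s x).injective
    rw [← h, Equiv.swap_apply_left]
  · rw [Equiv.trans_apply, Equiv.swap_apply_left]

theorem mainInd [Finite V] (hG : NoK G) {m : ℕ} (hm : 2 ≤ m) : ∀ (N : ℕ) (C : Set V),
    C.ncard ≤ N → ∀ α β e col, St G m C α β e col → Psi G m C col := by
  intro N
  induction N with
  | zero =>
    intro C hC α β e col h
    have : C = ∅ := (Set.ncard_eq_zero (Set.toFinite _)).1 (by omega)
    exact absurd h.cn.1 (by simp [this])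
  | succ N IH =>
    intro C hC α β e col h
    have ih : ∀ D, D ⊂ C → ∀ α β e col, St G m D α β e col → Psi G m D col := by
      intro D hD
      have := Set.ncard_lt_ncard hD (Set.toFinite _)
      exact IH D (by omega)
    set Q : V → Prop := fun z => ∃ v ∈ C, G.Adj v z with hQ
    by_cases ha2 : ∃ x ∈ α, ∃ y ∈ α, x ≠ y ∧ Q x ∧ Q y
    · obtain ⟨x, hx, y, hy, hxy, h1, h2⟩ := ha2
      exact caseMain hG hm h ih hx hy hxy h1 h2
    by_cases hb2 : ∃ x ∈ β, ∃ y ∈ β, x ≠ y ∧ Q x ∧ Q y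
    · obtain ⟨x, hx, y, hy, hxy, h1, h2⟩ := hb2
      exact caseMain hG hm h.swap ih hx hy hxy h1 h2
    have ha : ∀ x ∈ α, ∀ y ∈ α, Q x → Q y → x = y := by
      intro x hx y hy h1 h2
      by_contra hne
      exact ha2 ⟨x, hx, y, hy, hne, h1, h2⟩
    have hb : ∀ x ∈ β, ∀ y ∈ β, Q x → Q y → x = y := by
      intro x hx y hy h1 h2
      by_contra hne
      exact hb2 ⟨x, hx, y, hy, hne, h1, h2⟩
    -- single case
    have single : ∀ α β e, St G m C α β e col → (∀ x ∈ α, ∀ y ∈ α, Q x → Q y → x = y) →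
        (∃ x ∈ α, Q x) → (∀ x ∈ β, ¬ Q x) → Psi G m C col := by
      intro α β e h ha hx hnb
      obtain ⟨u, hu, x, hx, hxu⟩ := hx
      have hQu : Q u := ⟨x, hx, hxu⟩
      have hst : St G m C [u] [] e col := by
        refine ⟨h.cn, by simp, by simp, by simp, ?_, ?_, ?_, by simp, h.rb⟩
        · intro y hy
          have : y = u := by simpa using hy
          exact h.dj y (Or.inl (this ▸ hu))
        · intro v hv z hz hvz
          left
          rcases h.nb v hv z hz hvz with h' | h'
          · simpa using ha z h' u hu ⟨v, hv, hvz⟩ hQu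
          · exact absurd ⟨v, hv, hvz⟩ (hnb z h')
        · intro z hz v hv hvz
          have : z = u := by simpa using hz
          exact h.ca z (this ▸ hu) v hv hvz
      exact caseSmall hm hst hx (by simpa using hxu.symm) (by simpa using hxu) ih
    by_cases hα : ∃ x ∈ α, Q x
    · by_cases hβ : ∃ x ∈ β, Q x
      · obtain ⟨u, hu, hQu⟩ := hα
        obtain ⟨w, hw, hQw⟩ := hβ
        obtain ⟨a1, a2, rfl⟩ := List.append_of_mem hu
        obtain ⟨b1, b2, rfl⟩ := List.append_of_mem hw
        have huw : col u ≠ col w := by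
          obtain ⟨v, hv, hvu⟩ := hQu
          obtain ⟨v', hv', hvw⟩ := hQw
          obtain ⟨i, hi⟩ := h.ca u hu v hv hvu
          obtain ⟨j, hj⟩ := h.cb w hw v' hv' hvw
          rw [hi, hj]
          simp
        have hst01 : ((0 : Fin 3), (⟨0, by omega⟩ : Fin m)) ≠ (0, ⟨1, by omega⟩) := by simp
        obtain ⟨e', he0, he1⟩ := exists_two hst01 huw
        have hsub : (u :: (a2 ++ b1 ++ [w])) <:+: (a1 ++ u :: a2) ++ (b1 ++ w :: b2) :=
          ⟨a1, b2, by simp⟩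
        have hQs : ∀ z, (z ∈ a1 ++ u :: a2 ∨ z ∈ b1 ++ w :: b2) → Q z → z = u ∨ z = w := by
          rintro z (hz | hz) hQz
          · exact Or.inl (ha z hz u hu hQz hQu)
          · exact Or.inr (hb z hz w hw hQz hQw)
        have hmem : ∀ z ∈ (u :: (a2 ++ b1 ++ [w])), z ∈ a1 ++ u :: a2 ∨ z ∈ b1 ++ w :: b2 := by
          intro z hz
          have := hsub.subset hz
          exact List.mem_append.1 this
        have hst : St G m C (u :: (a2 ++ b1 ++ [w])) [] e' col := by
          refine ⟨h.cn, ?_, ?_, ?_, ?_, ?_, ?_, by simp, h.rb⟩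
          · rw [List.append_nil]; exact chain_part h.ch1 hsub
          · rw [List.nil_append]; exact chain_part h.ch1 hsub
          · rw [List.append_nil]; exact h.nd.sublist hsub.sublist
          · rintro z (hz | hz)
            · exact h.dj z (hmem z hz)
            · simp at hz
          · intro v hv z hz hvz
            left
            rcases hQs z (h.nb v hv z hz hvz) ⟨v, hv, hvz⟩ with rfl | rfl <;> simp
          · intro z hz v hv hvz
            rcases hQs z (hmem z hz) ⟨v, hv, hvz⟩ with rfl | rfl
            · exact ⟨_, he0.symm⟩
            · exact ⟨_, he1.symm⟩
        refine caseMain hG hm hst ih (x := u) (y := w) (by simp) (by simp) ?_ hQu hQw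
        rintro rfl
        exact huw rfl
      · push Not at hβ
        exact single α β e h ha hα hβ
    · push Not at hα
      by_cases hβ : ∃ x ∈ β, Q x
      · exact single β α _ h.swap hb hβ hα
      · push Not at hβ
        have hst : St G m C [] [] e col := by
          refine ⟨h.cn, by simp, by simp, by simp, by simp, ?_, by simp, by simp, h.rb⟩
          intro v hv z hz hvz
          rcases h.nb v hv z hz hvz with h' | h'
          · exact absurd ⟨v, hv, hvz⟩ (hα z h')
          · exact absurd ⟨v, hv, hvz⟩ (hβ z h')
        obtain ⟨x, hx⟩ := h.cn.1
        exact caseSmall hm hst hx (by simp) (by simp) ih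

theorem colouring [Finite V] (hG : NoK G) {m : ℕ} (hm : 2 ≤ m) :
    ∃ (col : V → Fin 3 × Fin m) (rk : V → ℕ),
      (∀ v z, G.Adj v z → rk z ≠ rk v) ∧ (∀ v z, G.Adj v z → col z ≠ col v) ∧
      (3 ≤ m → ∀ v z z', G.Adj v z → G.Adj v z' → rk z < rk v → rk z' < rk v → z ≠ z' →
        col z ≠ col z') := by
  have h : Psi G m Set.univ (fun _ : V => ((0 : Fin 3), (⟨0, by omega⟩ : Fin m))) := by
    refine split (P := ∅) (rkP := fun _ => 0)
      (col1 := fun _ : V => ((0 : Fin 3), (⟨0, by omega⟩ : Fin m)))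
      (by simp) (by simp) (by simp) (by simp) (by simp) ?_
    intro v hv
    have hout : ∀ y ∈ cmp G (Set.univ \ ∅) v, ∀ z, z ∉ cmp G (Set.univ \ ∅) v →
        ¬ G.Adj y z := by
      intro y hy z hz ha
      rcases cmp_out hv hy hz ha with h | h
      · exact h trivial
      · exact h
    refine mainInd hG hm _ _ le_rfl [] [] (Equiv.refl _) _
      ⟨Cn_cmp, by simp, by simp, by simp, by simp, ?_, by simp, by simp, ?_⟩
    · intro y hy z hz ha
      exact absurd ha (hout y hy z hz)
    · intro _ y hy z z' hz _ ha
      exact absurd ha (hout y hy z hz)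
  obtain ⟨col, rk, _, h⟩ := h
  refine ⟨col, rk, fun v z ha => (h v trivial).2.2 z trivial ha, fun v z ha => ?_,
    fun hm v z z' ha ha' hr hr' hne => (h v trivial).2.1 hm z z' ⟨ha, Or.inr hr⟩
      ⟨ha', Or.inr hr'⟩ hne⟩
  have hne := (h v trivial).2.2 z trivial ha
  rcases lt_or_gt_of_ne hne with hlt | hlt
  · exact (h v trivial).1 z ⟨ha, Or.inr hlt⟩
  · exact ((h z trivial).1 v ⟨ha.symm, Or.inr hlt⟩).symm

end PartD3

section PartE


theorem acyc_of_rank {W : Type*} (H : SimpleGraph W) (rk : W → ℕ)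
    (h1 : ∀ v z, H.Adj v z → rk z ≠ rk v)
    (h2 : ∀ v z z', H.Adj v z → H.Adj v z' → rk z < rk v → rk z' < rk v → z = z') :
    H.IsAcyclic := by
  intro v c hc
  obtain ⟨x, hx, hmax⟩ := c.support.toFinset.exists_max_image rk ⟨v, by simp⟩
  have hx' : x ∈ c.support := by simpa using hx
  have hc' := hc.rotate hx'
  have hm : ∀ y ∈ (c.rotate x hx').support, rk y ≤ rk x := by
    intro y hy
    apply hmax
    simpa using hy
  have hn := hc'.not_nil
  have a1 := (c.rotate x hx').adj_snd hn
  have a2 := ((c.rotate x hx').adj_penultimate hn).symm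
  refine hc'.snd_ne_penultimate (h2 x _ _ a1 a2 ?_ ?_)
  · exact lt_of_le_of_ne (hm _ (SimpleGraph.Walk.getVert_mem_support _ _)) (h1 _ _ a1)
  · exact lt_of_le_of_ne (hm _ (SimpleGraph.Walk.getVert_mem_support _ _)) (h1 _ _ a2)

variable {V : Type*} {G : SimpleGraph V}

theorem strong_of [Finite V] {T : Set V} (ha : (G.induce T).IsAcyclic)
    (h : ∀ z ∈ T, ∃ a ∈ T, ∃ b ∈ T, ∃ c ∈ T, a ≠ c ∧ G.Adj a b ∧ G.Adj b c ∧ (z = a ∨ z = b)) :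
    IsStrongForest G 2 T := by
  refine ⟨ha, fun ⟨z, hz⟩ => ?_⟩
  obtain ⟨a, hat, b, hb, c, hc, hac, h1, h2, h3⟩ := h z hz
  have e1 : (G.induce T).Adj ⟨a, hat⟩ ⟨b, hb⟩ := h1
  have e2 : (G.induce T).Adj ⟨b, hb⟩ ⟨c, hc⟩ := h2
  have rb : (G.induce T).Reachable ⟨z, hz⟩ ⟨b, hb⟩ := by
    rcases h3 with rfl | rfl
    · exact e1.reachable
    · exact SimpleGraph.Reachable.refl _
  have ra := rb.trans e1.symm.reachable
  have rc := rb.trans e2.reachable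
  refine Nat.succ_le_of_lt ((Set.one_lt_ncard_iff (Set.toFinite _)).2
    ⟨s(⟨a, hat⟩, ⟨b, hb⟩), s(⟨b, hb⟩, ⟨c, hc⟩), ⟨e1, ?_⟩, ⟨e2, ?_⟩, ?_⟩)
  · intro x hx
    rcases Sym2.mem_iff.1 hx with rfl | rfl
    · exact ra
    · exact rb
  · intro x hx
    rcases Sym2.mem_iff.1 hx with rfl | rfl
    · exact rb
    · exact rc
  · intro he
    rw [Sym2.eq_iff] at he
    simp only [Subtype.mk.injEq] at he
    rcases he with ⟨rfl, rfl⟩ | ⟨h5, -⟩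
    · exact h1.ne rfl
    · exact hac h5

theorem no_tri {W : Type*} {H : SimpleGraph W} (hH : H.IsAcyclic) {a b c : W}
    (h1 : H.Adj a b) (h2 : H.Adj b c) (h3 : H.Adj c a) : False := by
  have := hH (SimpleGraph.Walk.cons h1 (SimpleGraph.Walk.cons h2
    (SimpleGraph.Walk.cons h3 SimpleGraph.Walk.nil)))
  apply this
  have := h1.ne
  have := h2.ne
  have := h3.ne
  simp [SimpleGraph.Walk.isCycle_def, SimpleGraph.Walk.isTrail_def]
  grind

/-- `w` is adjacent to exactly one end of the pair `u, v`. -/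
def Pw (G : SimpleGraph V) (u v w : V) : Prop :=
  w ≠ u ∧ w ≠ v ∧ ((G.Adj w u ∧ ¬ G.Adj w v) ∨ (G.Adj w v ∧ ¬ G.Adj w u))

theorem valid_pw [Finite V] {u v : V} (h : KValid G 2 s(u, v)) :
    G.Adj u v ∧ ∃ w, Pw G u v w := by
  obtain ⟨S, ⟨hac, hst⟩, hE, hm⟩ := h
  have huv : G.Adj u v := hE
  refine ⟨huv, ?_⟩
  by_contra hno
  push Not at hno
  have hu : u ∈ S := hm u (by simp)
  have hv : v ∈ S := hm v (by simp)
  have huv' : (G.induce S).Adj ⟨u, hu⟩ ⟨v, hv⟩ := huv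
  have hcl : ∀ x y : S, (G.induce S).Adj x y → (x.1 = u ∨ x.1 = v) → (y.1 = u ∨ y.1 = v) := by
    rintro ⟨x, hx⟩ ⟨y, hy⟩ ha hxx
    by_contra hyy
    have ha' : G.Adj x y := ha
    simp only [not_or] at hyy
    have k := hno y
    have key : G.Adj y u ∧ G.Adj y v := by
      rcases hxx with rfl | rfl <;> have := ha'.symm <;> unfold Pw at k <;> tauto
    exact no_tri hac huv' (c := ⟨y, hy⟩) key.2.symm key.1
  have hr : ∀ y : S, (G.induce S).Reachable ⟨u, hu⟩ y → y.1 = u ∨ y.1 = v := by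
    intro y hy
    rw [SimpleGraph.reachable_iff_reflTransGen] at hy
    induction hy with
    | refl => exact Or.inl rfl
    | tail _ hb ih => exact hcl _ _ hb ih
  have h2 := hst ⟨u, hu⟩
  obtain ⟨e, f, he, hf, hef⟩ := (Set.one_lt_ncard_iff (Set.toFinite _)).1 (Nat.lt_of_succ_le h2)
  have hone : ∀ e : Sym2 S, (e ∈ (G.induce S).edgeSet ∧
      ∀ x ∈ e, (G.induce S).Reachable ⟨u, hu⟩ x) → e = s(⟨u, hu⟩, ⟨v, hv⟩) := by
    intro e
    induction e with
    | _ a b =>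
      rintro ⟨hab, hx⟩
      have hab' : (G.induce S).Adj a b := hab
      have ra := hr a (hx a (by simp))
      have rb := hr b (hx b (by simp))
      have hne := hab'.ne
      rw [Sym2.eq_iff]
      rcases a with ⟨a, _⟩
      rcases b with ⟨b, _⟩
      simp only [Subtype.mk.injEq] at *
      grind
  exact hef ((hone e he).trans (hone f hf).symm)


end PartE

section PartF
variable {V : Type} {G : SimpleGraph V}

theorem noK_minor {ι : Type} {H : SimpleGraph ι} (hG : NoK G) (B : ι → Set V)
    (hd : ∀ x y z, z ∈ B x → z ∈ B y → x = y) (hc : ∀ x, Cn G (B x))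
    (ha : ∀ x y, H.Adj x y → Tch G (B x) (B y)) : NoK H := by
  rintro ⟨D, hD1, hD2, hD3, hD4⟩
  apply hG
  refine ⟨fun v => {z | ∃ x ∈ D v, z ∈ B x}, ?_, ?_, ?_, ?_⟩
  · intro u v huv
    refine Set.disjoint_left.2 ?_
    rintro z ⟨x, hx, hz⟩ ⟨y, hy, hz'⟩
    have := hd x y z hz hz'
    subst this
    exact Set.disjoint_left.1 (hD1 huv) hx hy
  · intro v
    obtain ⟨x, hx⟩ := hD2 v
    obtain ⟨z, hz⟩ := (hc x).1
    exact ⟨z, x, hx, hz⟩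
  · intro v
    apply Cn.connected
    obtain ⟨x, hx⟩ := hD2 v
    obtain ⟨z, hz⟩ := (hc x).1
    have hcn := (Cn_of_connected (hD3 v)).2
    have hsub : ∀ y ∈ D v, B y ⊆ {z | ∃ x ∈ D v, z ∈ B x} := fun y hy z hz => ⟨y, hy, hz⟩
    have key : ∀ y, RS H (D v) x y → y ∈ D v → ∀ t ∈ B y,
        RS G {z | ∃ x ∈ D v, z ∈ B x} z t := by
      intro y hy
      unfold RS at hy
      induction hy with
      | refl => exact fun hyD t ht => ((hc x).2 z hz t ht).mono' (hsub x hx)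
      | tail h1 h2 ih =>
        intro hyD t ht
        obtain ⟨p, hp, q, hq, hpq⟩ := ha _ _ h2.2.2
        have r1 := ih h2.1 p hp
        exact (r1.tail' (hsub _ h2.1 hp) (hsub _ hyD hq) hpq).trans'
          (((hc _).2 q hq t ht).mono' (hsub _ hyD))
    refine Cn.of_root z ⟨x, hx, hz⟩ ?_
    rintro t ⟨y, hy, ht⟩
    exact key y (hcn x hx y hy) hy t ht
  · intro u v huv
    obtain ⟨x, hx, y, hy, h⟩ := hD4 u v huv
    obtain ⟨p, hp, q, hq, hpq⟩ := ha _ _ h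
    exact ⟨p, ⟨x, hx, hp⟩, q, ⟨y, hy, hq⟩, hpq⟩

/-- `z z'` is a valid edge that is a component of the subgraph induced by `S`. -/
def Iso (G : SimpleGraph V) (S : Set V) (z z' : V) : Prop :=
  z ∈ S ∧ z' ∈ S ∧ KValid G 2 s(z, z') ∧ G.Adj z z' ∧ (∀ y ∈ S, G.Adj y z → y = z') ∧
    ∀ y ∈ S, G.Adj y z' → y = z

theorem Iso.symm {S : Set V} {z z' : V} (h : Iso G S z z') : Iso G S z' z := by
  obtain ⟨h1, h2, h3, h4, h5, h6⟩ := h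
  exact ⟨h2, h1, by rwa [Sym2.eq_swap], h4.symm, h6, h5⟩

theorem Iso.uniq {S : Set V} {z z' z'' : V} (h : Iso G S z z') (h' : Iso G S z z'') :
    z' = z'' := h'.2.2.2.2.1 z' h.2.1 h.2.2.2.1.symm

theorem exists_wf [Finite V] (G : SimpleGraph V) : ∃ wf : Sym2 V → V, ∀ u v, KValid G 2 s(u, v) →
    Pw G u v (wf s(u, v)) := by
  have : ∀ e : Sym2 V, ∃ w, KValid G 2 e → ∀ u v, e = s(u, v) → Pw G u v w := by
    intro e
    induction e with
    | _ a b =>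
      by_cases h : KValid G 2 s(a, b)
      · obtain ⟨-, w, hw⟩ := valid_pw h
        refine ⟨w, fun _ u v he => ?_⟩
        rcases Sym2.eq_iff.1 he with ⟨rfl, rfl⟩ | ⟨rfl, rfl⟩
        · exact hw
        · unfold Pw at *
          tauto
      · exact ⟨a, fun h' => absurd h' h⟩
  choose wf hwf using this
  exact ⟨wf, fun u v h => hwf _ h u v rfl⟩

theorem iso_forests [Finite V] (hG : NoK G) (S : Set V) :
    ∃ F : Fin 3 × Fin 2 → Set V, (∀ i, IsStrongForest G 2 (F i)) ∧
      ∀ u v, Iso G S u v → ∃ i, u ∈ F i ∧ v ∈ F i := by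
  obtain ⟨wf, hwf⟩ := exists_wf G
  -- `M x z`: the vertex `z` belongs to the cluster of `x`
  obtain ⟨M, hM⟩ : ∃ M : V → V → Prop, ∀ x z, M x z ↔ ∃ z', Iso G S z z' ∧ wf s(z, z') = x :=
    ⟨_, fun _ _ => Iff.rfl⟩
  have M1 : ∀ x z, M x z → ∃ z', Iso G S z z' ∧ M x z' ∧ Pw G z z' x ∧ x ∉ S := by
    intro x z h
    obtain ⟨z', hz, rfl⟩ := (hM _ _).1 h
    have hp := hwf _ _ hz.2.2.1
    refine ⟨z', hz, (hM _ _).2 ⟨z, hz.symm, by rw [Sym2.eq_swap]⟩, hp, fun hS => ?_⟩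
    obtain ⟨p1, p2, ⟨p3, -⟩ | ⟨p3, -⟩⟩ := hp
    · exact p2 (hz.2.2.2.2.1 _ hS p3)
    · exact p1 (hz.2.2.2.2.2 _ hS p3)
  have M2 : ∀ x y z, M x z → M y z → x = y := by
    intro x y z hx hy
    obtain ⟨z', hz, rfl⟩ := (hM _ _).1 hx
    obtain ⟨z'', hz', rfl⟩ := (hM _ _).1 hy
    rw [hz.uniq hz']
  have M3 : ∀ x z, M x z → z ∈ S := by
    intro x z hx
    obtain ⟨z', hz, rfl⟩ := (hM _ _).1 hx
    exact hz.1
  let W := {x // ∃ z, M x z}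
  have hWS : ∀ x : W, x.1 ∉ S := by
    rintro ⟨x, z, hz⟩
    obtain ⟨_, _, _, _, h⟩ := M1 x z hz
    exact h
  let B : W → Set V := fun x => {z | z = x.1 ∨ M x.1 z}
  have hd : ∀ x y z, z ∈ B x → z ∈ B y → x = y := by
    rintro x y z (rfl | hx) (hy | hy)
    · exact Subtype.ext hy
    · exact absurd (M3 _ _ hy) (hWS x)
    · subst hy
      exact absurd (M3 _ _ hx) (hWS y)
    · exact Subtype.ext (M2 _ _ _ hx hy)
  have hc : ∀ x, Cn G (B x) := by
    intro x
    have hx : x.1 ∈ B x := Or.inl rfl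
    refine Cn.of_root x.1 hx ?_
    rintro z (rfl | hz)
    · exact RS.refl' _
    · obtain ⟨z', h1, h2, ⟨-, -, h3⟩, -⟩ := M1 _ _ hz
      rcases h3 with ⟨h3, -⟩ | ⟨h3, -⟩
      · exact RS.edge hx (Or.inr hz) h3
      · exact (RS.edge hx (Or.inr h2) h3).tail' (Or.inr h2) (Or.inr hz) h1.2.2.2.1.symm
  let H : SimpleGraph W :=
    { Adj := fun x y => x ≠ y ∧ Tch G (B x) (B y)
      symm := ⟨fun x y h => ⟨h.1.symm, h.2.symm⟩⟩
      loopless := ⟨fun x h => h.1 rfl⟩ }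
  have hH : NoK H := noK_minor hG B hd hc fun x y h => h.2
  obtain ⟨κ, -, -, hκ, -⟩ := colouring hH (m := 2) le_rfl
  have hF : ∀ (x y : W) (a b : V), κ x = κ y → a ∈ B x → b ∈ B y → G.Adj a b → x = y := by
    intro x y a b hk ha hb hab
    by_contra hne
    exact hκ y x ⟨fun h => hne h.symm, b, hb, a, ha, hab.symm⟩ hk
  let rk : V → ℕ := fun z => if z ∉ S then 0 else if ∃ x, M x z ∧ G.Adj x z then 1 else 2
  have rk0 : ∀ z, z ∉ S → rk z = 0 := fun z hz => by simp [rk, hz]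
  have rk1 : ∀ x z, M x z → G.Adj x z → rk z = 1 := by
    intro x z hz ha
    have : ∃ x, M x z ∧ G.Adj x z := ⟨x, hz, ha⟩
    simp [rk, M3 _ _ hz, this]
  have rk2 : ∀ x z, M x z → ¬ G.Adj x z → rk z = 2 := by
    intro x z hz ha
    have : ¬ ∃ x, M x z ∧ G.Adj x z := by
      rintro ⟨y, hy, ha'⟩
      exact ha (M2 _ _ _ hy hz ▸ ha')
    simp [rk, M3 _ _ hz, this]
  refine ⟨fun k => {z | ∃ x : W, κ x = k ∧ z ∈ B x}, ?_, ?_⟩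
  · intro k
    -- structure of an edge in the union of the clusters
    have hedge : ∀ a b, (∃ x : W, κ x = k ∧ a ∈ B x) → (∃ x : W, κ x = k ∧ b ∈ B x) →
        G.Adj a b → ∃ x : W, (a = x.1 ∧ M x.1 b) ∨ (b = x.1 ∧ M x.1 a) ∨
          (M x.1 a ∧ M x.1 b ∧ Iso G S a b ∧ Pw G a b x.1) := by
      rintro a b ⟨x, hx, ha⟩ ⟨y, hy, hb⟩ hab
      have := hF x y a b (hx.trans hy.symm) ha hb hab
      subst this
      refine ⟨x, ?_⟩
      rcases ha with ha | ha <;> rcases hb with hb | hb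
      · exact absurd (ha.trans hb.symm) hab.ne
      · exact Or.inl ⟨ha, hb⟩
      · exact Or.inr (Or.inl ⟨hb, ha⟩)
      · obtain ⟨b', h1, h2, h3, -⟩ := M1 _ _ ha
        have := h1.2.2.2.2.1 b (M3 _ _ hb) hab.symm
        subst this
        exact Or.inr (Or.inr ⟨ha, hb, h1, h3⟩)
    apply strong_of
    · refine acyc_of_rank _ (fun z => rk z.1) ?_ ?_
      · rintro ⟨a, ha⟩ ⟨b, hb⟩ hab
        have hab : G.Adj a b := hab
        show rk b ≠ rk a
        obtain ⟨x, ⟨h1, h2⟩ | ⟨h1, h2⟩ | ⟨h1, h2, h3, h4⟩⟩ := hedge a b ha hb hab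
        · subst h1
          rw [rk0 _ (hWS x), rk1 _ _ h2 hab]
          decide
        · subst h1
          rw [rk0 _ (hWS x), rk1 _ _ h2 hab.symm]
          decide
        · obtain ⟨-, -, ⟨p1, p2⟩ | ⟨p1, p2⟩⟩ := h4
          · rw [rk1 _ _ h1 p1, rk2 _ _ h2 p2]
            decide
          · rw [rk1 _ _ h2 p1, rk2 _ _ h1 p2]
            decide
      · -- a lower neighbour is determined
        have hlow : ∀ a b, (∃ x : W, κ x = k ∧ a ∈ B x) → (∃ x : W, κ x = k ∧ b ∈ B x) →
            G.Adj a b → rk b < rk a → ∃ x : W, M x.1 a ∧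
              ((G.Adj x.1 a ∧ b = x.1) ∨ (¬ G.Adj x.1 a ∧ Iso G S a b)) := by
          intro a b ha hb hab hlt
          obtain ⟨x, ⟨h1, h2⟩ | ⟨h1, h2⟩ | ⟨h1, h2, h3, h4⟩⟩ := hedge a b ha hb hab
          · subst h1
            rw [rk0 _ (hWS x)] at hlt
            omega
          · subst h1
            exact ⟨x, h2, Or.inl ⟨hab.symm, rfl⟩⟩
          · refine ⟨x, h1, Or.inr ⟨fun p => ?_, h3⟩⟩
            obtain ⟨-, -, ⟨p1, p2⟩ | ⟨p1, p2⟩⟩ := h4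
            · rw [rk1 _ _ h1 p1, rk2 _ _ h2 p2] at hlt
              omega
            · exact p2 p
        rintro ⟨a, ha⟩ ⟨b, hb⟩ ⟨c, hc⟩ hab hac h1 h2
        obtain ⟨x, m1, k1⟩ := hlow a b ha hb hab h1
        obtain ⟨y, m2, k2⟩ := hlow a c ha hc hac h2
        have hxy := M2 _ _ _ m1 m2
        rw [← hxy] at k2
        apply Subtype.ext
        show b = c
        rcases k1 with ⟨k1, k1'⟩ | ⟨k1, k1'⟩ <;> rcases k2 with ⟨k2, k2'⟩ | ⟨k2, k2'⟩
        · rw [k1', k2']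
        · exact absurd k1 k2
        · exact absurd k2 k1
        · exact k1'.uniq k2'
    · have pth : ∀ (x : W) z, κ x = k → M x.1 z → ∃ a b, a ≠ x.1 ∧ G.Adj x.1 b ∧ G.Adj b a ∧
          (z = a ∨ z = b) ∧ M x.1 a ∧ M x.1 b := by
        intro x z hx hz
        obtain ⟨z', h1, h2, ⟨p0, p1, ⟨p, -⟩ | ⟨p, -⟩⟩, -⟩ := M1 _ _ hz
        · exact ⟨z', z, p1.symm, p, h1.2.2.2.1, Or.inr rfl, h2, hz⟩
        · exact ⟨z, z', p0.symm, p, h1.2.2.2.1.symm, Or.inl rfl, hz, h2⟩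
      rintro z ⟨x, hx, hz⟩
      have hxF : ∃ x' : W, κ x' = k ∧ x.1 ∈ B x' := ⟨x, hx, Or.inl rfl⟩
      have hMF : ∀ a, M x.1 a → ∃ x' : W, κ x' = k ∧ a ∈ B x' := fun a ha => ⟨x, hx, Or.inr ha⟩
      rcases hz with rfl | hz
      · obtain ⟨z, hz⟩ := x.2
        obtain ⟨a, b, n, h1, h2, -, h4, h5⟩ := pth x z hx hz
        exact ⟨x.1, hxF, b, hMF b h5, a, hMF a h4, n.symm, h1, h2, Or.inl rfl⟩
      · obtain ⟨a, b, n, h1, h2, h3, h4, h5⟩ := pth x z hx hz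
        exact ⟨a, hMF a h4, b, hMF b h5, x.1, hxF, n, h2.symm, h1.symm, h3⟩
  · intro u v h
    have hu : M (wf s(u, v)) u := (hM _ _).2 ⟨v, h, rfl⟩
    have hv : M (wf s(u, v)) v := (hM _ _).2 ⟨u, h.symm, by rw [Sym2.eq_swap]⟩
    let x : W := ⟨wf s(u, v), u, hu⟩
    exact ⟨κ x, ⟨x, rfl, Or.inr hu⟩, ⟨x, rfl, Or.inr hv⟩⟩

theorem set_forests [Finite V] (hG : NoK G) (S : Set V) (hS : (G.induce S).IsAcyclic) :
    ∃ F : Option (Fin 3 × Fin 2) → Set V, (∀ i, IsStrongForest G 2 (F i)) ∧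
      ∀ u v, KValid G 2 s(u, v) → u ∈ S → v ∈ S → ∃ i, u ∈ F i ∧ v ∈ F i := by
  obtain ⟨F, hF1, hF2⟩ := iso_forests hG S
  let T : Set V := {z | ∃ a ∈ S, ∃ b ∈ S, ∃ c ∈ S, a ≠ c ∧ G.Adj a b ∧ G.Adj b c ∧ (z = a ∨ z = b)}
  have hTS : T ⊆ S := by
    rintro z ⟨a, ha, b, hb, c, hc, -, -, -, rfl | rfl⟩
    · exact ha
    · exact hb
  have hT3 : ∀ a ∈ S, ∀ b ∈ S, ∀ c ∈ S, a ≠ c → G.Adj a b → G.Adj b c → a ∈ T ∧ b ∈ T ∧ c ∈ T :=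
    fun a ha b hb c hc n h1 h2 => ⟨⟨a, ha, b, hb, c, hc, n, h1, h2, Or.inl rfl⟩,
      ⟨a, ha, b, hb, c, hc, n, h1, h2, Or.inr rfl⟩,
      ⟨c, hc, b, hb, a, ha, n.symm, h2.symm, h1.symm, Or.inl rfl⟩⟩
  refine ⟨fun o => o.elim T F, ?_, ?_⟩
  · rintro (_ | k)
    · refine strong_of (hS.embedding (G.induceHomOfLE hTS)) ?_
      rintro z ⟨a, ha, b, hb, c, hc, n, h1, h2, h3⟩
      obtain ⟨t1, t2, t3⟩ := hT3 a ha b hb c hc n h1 h2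
      exact ⟨a, t1, b, t2, c, t3, n, h1, h2, h3⟩
    · exact hF1 k
  · intro u v hv hu hvS
    have huv := (valid_pw hv).1
    by_cases c1 : ∀ y ∈ S, G.Adj y u → y = v
    · by_cases c2 : ∀ y ∈ S, G.Adj y v → y = u
      · obtain ⟨i, hi⟩ := hF2 u v ⟨hu, hvS, hv, huv, c1, c2⟩
        exact ⟨some i, hi⟩
      · push Not at c2
        obtain ⟨y, hy, ha, hn⟩ := c2
        obtain ⟨t1, t2, t3⟩ := hT3 u hu v hvS y hy hn.symm huv ha.symm
        exact ⟨none, t1, t2⟩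
    · push Not at c1
      obtain ⟨y, hy, ha, hn⟩ := c1
      obtain ⟨t1, t2, t3⟩ := hT3 y hy u hu v hvS hn ha huv
      exact ⟨none, t2, t3⟩

theorem bound [Finite V] (hG : NoK G) : fStrong G 2 ≤ 310 := by
  obtain ⟨col, rk, h1, h2, h3⟩ := colouring hG (m := 3) (by decide)
  replace h3 := h3 le_rfl
  let c : V → Fin 9 := fun v => finProdFinEquiv (col v)
  have hc : ∀ u v, c u = c v → col u = col v := fun u v h => finProdFinEquiv.injective h
  have hac : ∀ p : {p : Fin 9 × Fin 9 // p.1 < p.2},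
      (G.induce {v | c v = p.1.1 ∨ c v = p.1.2}).IsAcyclic := by
    intro p
    refine acyc_of_rank _ (fun v => rk v.1) (fun v z h => h1 _ _ h) ?_
    rintro ⟨v, hv⟩ ⟨z, hz⟩ ⟨z', hz'⟩ ha ha' hr hr'
    have ha : G.Adj v z := ha
    have ha' : G.Adj v z' := ha'
    by_contra hne
    have k1 := h3 v z z' ha ha' hr hr' (fun h => hne (Subtype.ext h))
    have k2 := h2 v z ha
    have k3 := h2 v z' ha'
    have hv : c v = p.1.1 ∨ c v = p.1.2 := hv
    have hz : c z = p.1.1 ∨ c z = p.1.2 := hz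
    have hz' : c z' = p.1.1 ∨ c z' = p.1.2 := hz'
    have k1' := mt (hc z z') k1
    have k2' := mt (hc z v) k2
    have k3' := mt (hc z' v) k3
    grind
  choose F hF1 hF2 using fun p => set_forests hG _ (hac p)
  let J := {p : Fin 9 × Fin 9 // p.1 < p.2} × Option (Fin 3 × Fin 2)
  have hJ : Fintype.card J = 252 := by
    have : Fintype.card {p : Fin 9 × Fin 9 // p.1 < p.2} = 36 := by
      rw [Fintype.card_subtype]
      rfl
    simp [J, this]
  have e : Fin 252 ≃ J := (Fintype.equivFinOfCardEq hJ).symm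
  refine le_trans (Nat.sInf_le (m := 252) ⟨fun i => F (e i).1 (e i).2, fun i => hF1 _ _, ?_⟩)
    (by decide)
  intro f
  induction f with
  | _ u v =>
    intro hv
    have huv := (valid_pw hv).1
    have hne : c u ≠ c v := fun h => h2 u v huv (hc u v h).symm
    obtain ⟨p, hp1, hp2⟩ : ∃ p : {p : Fin 9 × Fin 9 // p.1 < p.2},
        (c u = p.1.1 ∨ c u = p.1.2) ∧ (c v = p.1.1 ∨ c v = p.1.2) := by
      rcases lt_or_gt_of_ne hne with h | h
      · exact ⟨⟨(c u, c v), h⟩, Or.inl rfl, Or.inr rfl⟩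
      · exact ⟨⟨(c v, c u), h⟩, Or.inr rfl, Or.inl rfl⟩
    obtain ⟨i, hi1, hi2⟩ := hF2 p u v hv hp1 hp2
    refine ⟨e.symm (p, i), huv, ?_⟩
    intro x hx
    show x ∈ F (e (e.symm (p, i))).1 (e (e.symm (p, i))).2
    rw [Equiv.apply_symm_apply]
    rcases Sym2.mem_iff.1 hx with rfl | rfl
    · exact hi1
    · exact hi2

end PartF

/-- Every planar finite simple graph `G` satisfies `f₂(G) ≤ 310`. -/
theorem fStrong_two_le_of_planar {V : Type} [Fintype V] (G : SimpleGraph V)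
    (hG : IsPlanar G) :
    fStrong G 2 ≤ 310 := by
  exact bound hG.2
end InducedArboricity
end
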